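/- arXiv:2312.11951 — 6 statements merged into one kernel-verified Lean document; each statement's English description precedes it below -/
import Mathlib

section
/- For every odd integer n > 1, the number of CNATs of size n whose associated permutation has sign +1 equals the number of CNATs of size n whose associated permutation has sign −1, and both equal T_n/2, where T_n is the total number of CNATs of size n. -/
/-!
Formalization of complete non-ambiguous trees (CNATs).

A CNAT of size `n` is modelled as a Boolean filling `D : Fin n → Fin n → Bool`
of the `n × n` grid (`D i j = true` meaning that cell in row `i`, column `j`
is dotted; rows are numbered from the top, columns from the left, `0`-based),
satisfying the root, non-ambiguity, minimality and completeness conditions.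
-/

namespace CNATf

/-- A filling of the `n × n` grid. -/
abbrev Grid (n : ℕ) := Fin n → Fin n → Bool

/-- Cell `(i, j)` is dotted. -/
def Dotted {n : ℕ} (D : Grid n) (i j : Fin n) : Prop := D i j = true

/-- There is a dotted cell above `(i, j)` in the same column. -/
def HasDotAbove {n : ℕ} (D : Grid n) (i j : Fin n) : Prop :=
  ∃ i' : Fin n, i' < i ∧ Dotted D i' j

/-- There is a dotted cell to the left of `(i, j)` in the same row. -/
def HasDotLeft {n : ℕ} (D : Grid n) (i j : Fin n) : Prop :=
  ∃ j' : Fin n, j' < j ∧ Dotted D i j'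

/-- There is a dotted cell below `(i, j)` in the same column. -/
def HasDotBelow {n : ℕ} (D : Grid n) (i j : Fin n) : Prop :=
  ∃ i' : Fin n, i < i' ∧ Dotted D i' j

/-- There is a dotted cell to the right of `(i, j)` in the same row. -/
def HasDotRight {n : ℕ} (D : Grid n) (i j : Fin n) : Prop :=
  ∃ j' : Fin n, j < j' ∧ Dotted D i j'

/-- `D` is a complete non-ambiguous tree (CNAT) on the `n × n` grid:
root, non-ambiguity, minimality (rows and columns), completeness. -/
def IsCNAT {n : ℕ} (D : Grid n) : Prop :=
  (∀ i j : Fin n, (i : ℕ) = 0 → (j : ℕ) = 0 → Dotted D i j) ∧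
  (∀ i j : Fin n, Dotted D i j → ¬((i : ℕ) = 0 ∧ (j : ℕ) = 0) →
      Xor' (HasDotAbove D i j) (HasDotLeft D i j)) ∧
  (∀ i : Fin n, ∃ j : Fin n, Dotted D i j) ∧
  (∀ j : Fin n, ∃ i : Fin n, Dotted D i j) ∧
  (∀ i j : Fin n, Dotted D i j →
      (HasDotBelow D i j ∧ HasDotRight D i j) ∨ (¬HasDotBelow D i j ∧ ¬HasDotRight D i j))

/-- A leaf: a dotted cell with no dot below it in its column and no dot
to its right in its row. -/
def IsLeaf {n : ℕ} (D : Grid n) (i j : Fin n) : Prop :=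
  Dotted D i j ∧ ¬HasDotBelow D i j ∧ ¬HasDotRight D i j

/-- An internal dot: a dotted cell with both a dot below it in its column and
a dot to its right in its row. -/
def IsInternal {n : ℕ} (D : Grid n) (i j : Fin n) : Prop :=
  Dotted D i j ∧ HasDotBelow D i j ∧ HasDotRight D i j

/-- `p` is the nearest dotted cell above `l` in the column of `l`. -/
def ParentAbove {n : ℕ} (D : Grid n) (p l : Fin n × Fin n) : Prop :=
  p.2 = l.2 ∧ p.1 < l.1 ∧ Dotted D p.1 p.2 ∧
    ∀ k : Fin n, p.1 < k → k < l.1 → ¬Dotted D k l.2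

/-- `p` is the nearest dotted cell to the left of `l` in the row of `l`,
and there is no dotted cell above `l` in its column. -/
def ParentLeft {n : ℕ} (D : Grid n) (p l : Fin n × Fin n) : Prop :=
  p.1 = l.1 ∧ p.2 < l.2 ∧ Dotted D p.1 p.2 ∧
    (∀ k : Fin n, p.2 < k → k < l.2 → ¬Dotted D l.1 k) ∧
    ¬HasDotAbove D l.1 l.2

/-- `p` is the parent of the dot `l`: the nearest dotted cell above `l` in its
column if such a cell exists, otherwise the nearest dotted cell to its left. -/
def IsParent {n : ℕ} (D : Grid n) (p l : Fin n × Fin n) : Prop :=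
  ParentAbove D p l ∨ ParentLeft D p l

/-- `c` is the left child of the internal dot `p`: the nearest dot below `p`
in the column of `p`. -/
def IsLeftChild {n : ℕ} (D : Grid n) (p c : Fin n × Fin n) : Prop :=
  c.2 = p.2 ∧ p.1 < c.1 ∧ Dotted D c.1 c.2 ∧
    ∀ k : Fin n, p.1 < k → k < c.1 → ¬Dotted D k p.2

/-- `c` is the right child of the internal dot `p`: the nearest dot to the
right of `p` in the row of `p`. -/
def IsRightChild {n : ℕ} (D : Grid n) (p c : Fin n × Fin n) : Prop :=
  c.1 = p.1 ∧ p.2 < c.2 ∧ Dotted D c.1 c.2 ∧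
    ∀ k : Fin n, p.2 < k → k < c.2 → ¬Dotted D p.1 k

/-- A left leaf: a leaf whose parent is above it in its column. -/
def IsLeftLeaf {n : ℕ} (D : Grid n) (l : Fin n × Fin n) : Prop :=
  IsLeaf D l.1 l.2 ∧ ∃ p : Fin n × Fin n, ParentAbove D p l

/-- A right leaf: a leaf whose parent is to its left in its row. -/
def IsRightLeaf {n : ℕ} (D : Grid n) (l : Fin n × Fin n) : Prop :=
  IsLeaf D l.1 l.2 ∧ ∃ p : Fin n × Fin n, ParentLeft D p l

/-- A short leaf: a leaf whose parent lies in a cell adjacent to it. -/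
def IsShortLeaf {n : ℕ} (D : Grid n) (l : Fin n × Fin n) : Prop :=
  IsLeaf D l.1 l.2 ∧ ∃ p : Fin n × Fin n, IsParent D p l ∧
    (((p.1 : ℕ) + 1 = (l.1 : ℕ) ∧ p.2 = l.2) ∨ ((p.2 : ℕ) + 1 = (l.2 : ℕ) ∧ p.1 = l.1))

/-- A long leaf: a leaf which is not short. -/
def IsLongLeaf {n : ℕ} (D : Grid n) (l : Fin n × Fin n) : Prop :=
  IsLeaf D l.1 l.2 ∧ ¬IsShortLeaf D l

/-- All leaves of `D` are short (i.e. `D ∈ 𝒜ₙ`). -/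
def AllLeavesShort {n : ℕ} (D : Grid n) : Prop :=
  ∀ l : Fin n × Fin n, IsLeaf D l.1 l.2 → IsShortLeaf D l

/-- `π` is the permutation associated with the CNAT `D`: for every row `i`,
the leaf of row `i` lies in column `π i`. -/
def IsAssocPerm {n : ℕ} (D : Grid n) (π : Equiv.Perm (Fin n)) : Prop :=
  ∀ i : Fin n, IsLeaf D i (π i)

/-- Two left leaves `l₁`, `l₂` (with respective parents `p₁`, `p₂`) are
interacting if `r(p₁) < r(l₂) < r(l₁)` or `r(p₂) < r(l₁) < r(l₂)`. -/
def InteractingLeft {n : ℕ} (D : Grid n) (l₁ l₂ : Fin n × Fin n) : Prop :=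
  IsLeftLeaf D l₁ ∧ IsLeftLeaf D l₂ ∧
    ∃ p₁ p₂ : Fin n × Fin n, ParentAbove D p₁ l₁ ∧ ParentAbove D p₂ l₂ ∧
      ((p₁.1 < l₂.1 ∧ l₂.1 < l₁.1) ∨ (p₂.1 < l₁.1 ∧ l₁.1 < l₂.1))

/-- Two right leaves `l₁`, `l₂` (with respective parents `p₁`, `p₂`) are
interacting if `c(p₁) < c(l₂) < c(l₁)` or `c(p₂) < c(l₁) < c(l₂)`. -/
def InteractingRight {n : ℕ} (D : Grid n) (l₁ l₂ : Fin n × Fin n) : Prop :=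
  IsRightLeaf D l₁ ∧ IsRightLeaf D l₂ ∧
    ∃ p₁ p₂ : Fin n × Fin n, ParentLeft D p₁ l₁ ∧ ParentLeft D p₂ l₂ ∧
      ((p₁.2 < l₂.2 ∧ l₂.2 < l₁.2) ∨ (p₂.2 < l₁.2 ∧ l₁.2 < l₂.2))

/-- Two leaves are interacting (as left leaves or as right leaves). -/
def Interacting {n : ℕ} (D : Grid n) (l₁ l₂ : Fin n × Fin n) : Prop :=
  InteractingLeft D l₁ l₂ ∨ InteractingRight D l₁ l₂

/-- The switch `S(T, l₁, l₂)` of two interacting leaves: `l₁` and `l₂` are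
erased and replaced by dots at `(r(l₂), c(l₁))` and `(r(l₁), c(l₂))`
(for left leaves this exchanges their row labels, for right leaves this
exchanges their column labels; both descriptions yield the same filling). -/
def switchLeaves {n : ℕ} (D : Grid n) (l₁ l₂ : Fin n × Fin n) : Grid n := fun i j =>
  if (i = l₂.1 ∧ j = l₁.2) ∨ (i = l₁.1 ∧ j = l₂.2) then true
  else if (i = l₁.1 ∧ j = l₁.2) ∨ (i = l₂.1 ∧ j = l₂.2) then false
  else D i j


/-! ### Proof: a sign-reversing involution swapping adjacent rows / columns -/

/-- Transpose of a filling. -/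
def tr {n : ℕ} (D : Grid n) : Grid n := fun i j => D j i

theorem tr_cnat {n : ℕ} {D : Grid n} (h : IsCNAT D) : IsCNAT (tr D) := by
  obtain ⟨h1, h2, h3, h4, h5⟩ := h
  refine ⟨fun i j hi hj => h1 j i hj hi, fun i j hd hne => ?_, h4, h3, fun i j hd => ?_⟩
  · have := h2 j i hd (fun h => hne ⟨h.2, h.1⟩)
    exact this.symm
  · rcases h5 j i hd with ⟨a, b⟩ | ⟨a, b⟩
    · exact Or.inl ⟨b, a⟩
    · exact Or.inr ⟨b, a⟩

theorem tr_assoc {n : ℕ} {D : Grid n} {π : Equiv.Perm (Fin n)} (h : IsAssocPerm D π) :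
    IsAssocPerm (tr D) π⁻¹ := by
  intro i
  have := h (π⁻¹ i)
  rw [show π (π⁻¹ i) = i from π.apply_symm_apply i] at this
  exact ⟨this.1, this.2.2, this.2.1⟩

theorem swap_order {n : ℕ} (r s : Fin n) (hrs : (s : ℕ) = r + 1) (i i' : Fin n)
    (h1 : ¬(i = r ∧ i' = s)) (h2 : ¬(i = s ∧ i' = r)) :
    (Equiv.swap r s i < Equiv.swap r s i' ↔ i < i') := by
  simp only [Equiv.swap_apply_def]
  split_ifs <;> simp only [Fin.lt_def, Fin.ext_iff] at * <;> omega

/-- Permute the rows of a filling. -/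
def rowSwap {n : ℕ} (r s : Fin n) (D : Grid n) : Grid n := fun i j => D (Equiv.swap r s i) j

section
variable {n : ℕ} {D : Grid n} {r s : Fin n}

theorem above_swap (hrs : (s : ℕ) = r + 1) (hd : ∀ j, ¬(Dotted D r j ∧ Dotted D s j))
    (i j : Fin n) (hij : Dotted (rowSwap r s D) i j) :
    HasDotAbove (rowSwap r s D) i j ↔ HasDotAbove D (Equiv.swap r s i) j := by
  have key : ∀ i', Dotted (rowSwap r s D) i' j →
      (Equiv.swap r s i' < Equiv.swap r s i ↔ i' < i) := by
    intro i' hi'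
    apply swap_order r s hrs
    · rintro ⟨rfl, rfl⟩
      simp only [Dotted, rowSwap, Equiv.swap_apply_left, Equiv.swap_apply_right] at hi' hij
      exact hd j ⟨hij, hi'⟩
    · rintro ⟨rfl, rfl⟩
      simp only [Dotted, rowSwap, Equiv.swap_apply_left, Equiv.swap_apply_right] at hi' hij
      exact hd j ⟨hi', hij⟩
  constructor
  · rintro ⟨i', h1, h2⟩
    exact ⟨_, (key i' h2).2 h1, h2⟩
  · rintro ⟨i', h1, h2⟩
    have h3 : Dotted (rowSwap r s D) (Equiv.swap r s i') j := by
      simpa [Dotted, rowSwap] using h2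
    refine ⟨_, (key _ h3).1 ?_, h3⟩
    simpa using h1

theorem below_swap (hrs : (s : ℕ) = r + 1) (hd : ∀ j, ¬(Dotted D r j ∧ Dotted D s j))
    (i j : Fin n) (hij : Dotted (rowSwap r s D) i j) :
    HasDotBelow (rowSwap r s D) i j ↔ HasDotBelow D (Equiv.swap r s i) j := by
  have key : ∀ i', Dotted (rowSwap r s D) i' j →
      (Equiv.swap r s i < Equiv.swap r s i' ↔ i < i') := by
    intro i' hi'
    apply swap_order r s hrs
    · rintro ⟨rfl, rfl⟩
      simp only [Dotted, rowSwap, Equiv.swap_apply_left, Equiv.swap_apply_right] at hi' hij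
      exact hd j ⟨hi', hij⟩
    · rintro ⟨rfl, rfl⟩
      simp only [Dotted, rowSwap, Equiv.swap_apply_left, Equiv.swap_apply_right] at hi' hij
      exact hd j ⟨hij, hi'⟩
  constructor
  · rintro ⟨i', h1, h2⟩
    exact ⟨_, (key i' h2).2 h1, h2⟩
  · rintro ⟨i', h1, h2⟩
    have h3 : Dotted (rowSwap r s D) (Equiv.swap r s i') j := by
      simpa [Dotted, rowSwap] using h2
    refine ⟨_, (key _ h3).1 ?_, h3⟩
    simpa using h1

theorem swap_zero_iff (hr : 0 < (r : ℕ)) (hrs : (s : ℕ) = r + 1) (i : Fin n) :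
    ((Equiv.swap r s i : Fin n) : ℕ) = 0 ↔ (i : ℕ) = 0 := by
  simp only [Equiv.swap_apply_def]
  split_ifs <;> simp only [Fin.ext_iff] at * <;> omega

theorem rowSwap_cnat (hr : 0 < (r : ℕ)) (hrs : (s : ℕ) = r + 1)
    (hd : ∀ j, ¬(Dotted D r j ∧ Dotted D s j)) (h : IsCNAT D) : IsCNAT (rowSwap r s D) := by
  obtain ⟨h1, h2, h3, h4, h5⟩ := h
  refine ⟨fun i j hi hj => h1 _ j ((swap_zero_iff hr hrs i).2 hi) hj, fun i j hij hne => ?_,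
    fun i => h3 _, fun j => ?_, fun i j hij => ?_⟩
  · rw [above_swap hrs hd i j hij]
    exact h2 _ j hij (fun h => hne ⟨(swap_zero_iff hr hrs i).1 h.1, h.2⟩)
  · obtain ⟨i, hi⟩ := h4 j
    exact ⟨Equiv.swap r s i, by simpa [Dotted, rowSwap] using hi⟩
  · rw [below_swap hrs hd i j hij]
    exact h5 _ j hij

theorem rowSwap_assoc (hrs : (s : ℕ) = r + 1)
    (hd : ∀ j, ¬(Dotted D r j ∧ Dotted D s j)) {π : Equiv.Perm (Fin n)} (h : IsAssocPerm D π) :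
    IsAssocPerm (rowSwap r s D) (π * Equiv.swap r s) := by
  intro i
  have h0 := h (Equiv.swap r s i)
  have hij : Dotted (rowSwap r s D) i (π (Equiv.swap r s i)) := h0.1
  refine ⟨hij, ?_, h0.2.2⟩
  rw [Equiv.Perm.mul_apply, below_swap hrs hd i _ hij]
  exact h0.2.1

end

/-- Lower row of the `k`-th pair. -/
def pa {m : ℕ} (k : Fin m) : Fin (2 * m + 1) := ⟨2 * k + 1, by omega⟩

/-- Upper row of the `k`-th pair. -/
def pb {m : ℕ} (k : Fin m) : Fin (2 * m + 1) := ⟨2 * k + 2, by omega⟩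

/-- Rows of the `k`-th pair share no column. -/
def GoodRow {m : ℕ} (D : Grid (2 * m + 1)) (k : Fin m) : Prop :=
  ∀ j, ¬(Dotted D (pa k) j ∧ Dotted D (pb k) j)

theorem goodRow_row {m : ℕ} (D : Grid (2 * m + 1)) (l : Fin m) :
    GoodRow (rowSwap (pa l) (pb l) D) = GoodRow D := by
  funext k
  apply propext
  by_cases hkl : k = l
  · subst hkl
    simp only [GoodRow, Dotted, rowSwap, Equiv.swap_apply_left, Equiv.swap_apply_right]
    exact forall_congr' fun j => not_congr and_comm
  · have hv : (k : ℕ) ≠ l := fun h => hkl (Fin.ext h)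
    simp only [GoodRow, Dotted, rowSwap]
    rw [Equiv.swap_apply_of_ne_of_ne, Equiv.swap_apply_of_ne_of_ne] <;>
    · simp only [pa, pb, ne_eq, Fin.mk.injEq]
      omega

theorem goodRow_col {m : ℕ} (D : Grid (2 * m + 1)) (l : Fin m) :
    GoodRow (tr (rowSwap (pa l) (pb l) (tr D))) = GoodRow D := by
  funext k
  apply propext
  simp only [GoodRow, Dotted, rowSwap, tr]
  constructor
  · intro h j
    simpa using h (Equiv.swap (pa l) (pb l) j)
  · intro h j
    exact h _

open Classical in
/-- The involution. -/
noncomputable def inv {m : ℕ} (D : Grid (2 * m + 1)) : Grid (2 * m + 1) :=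
  if h : ∃ k, GoodRow D k then rowSwap (pa h.choose) (pb h.choose) D
  else if h' : ∃ k, GoodRow (tr D) k then
    tr (rowSwap (pa h'.choose) (pb h'.choose) (tr D))
  else D

theorem rowSwap_rowSwap {n : ℕ} (r s : Fin n) (D : Grid n) :
    rowSwap r s (rowSwap r s D) = D := by
  funext i j
  simp [rowSwap]

theorem tr_tr {n : ℕ} (D : Grid n) : tr (tr D) = D := rfl

theorem choose_congr {α : Type*} {P Q : α → Prop} (e : P = Q) (h : ∃ k, P k) (h' : ∃ k, Q k) :
    h.choose = h'.choose := by
  subst e; rfl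

theorem inv_inv {m : ℕ} (D : Grid (2 * m + 1)) : inv (inv D) = D := by
  by_cases h : ∃ k, GoodRow D k
  · have e : inv D = rowSwap (pa h.choose) (pb h.choose) D := by simp only [inv, dif_pos h]
    have g : GoodRow (inv D) = GoodRow D := by rw [e, goodRow_row]
    have h2 : ∃ k, GoodRow (inv D) k := by rwa [g]
    have e2 : inv (inv D) = rowSwap (pa h2.choose) (pb h2.choose) (inv D) := by
      rw [inv, dif_pos h2]
    rw [e2, choose_congr g h2 h, e, rowSwap_rowSwap]
  · by_cases h' : ∃ k, GoodRow (tr D) k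
    · have e : inv D = tr (rowSwap (pa h'.choose) (pb h'.choose) (tr D)) := by
        rw [inv, dif_neg h, dif_pos h']
      have g : GoodRow (inv D) = GoodRow D := by rw [e, goodRow_col]
      have g' : GoodRow (tr (inv D)) = GoodRow (tr D) := by rw [e, tr_tr, goodRow_row]
      have h2 : ¬ ∃ k, GoodRow (inv D) k := by rwa [g]
      have h2' : ∃ k, GoodRow (tr (inv D)) k := by rwa [g']
      have e2 : inv (inv D) = tr (rowSwap (pa h2'.choose) (pb h2'.choose) (tr (inv D))) := by
        rw [inv, dif_neg h2, dif_pos h2']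
      rw [e2, choose_congr g' h2' h', e, tr_tr, rowSwap_rowSwap, tr_tr]
    · have e : inv D = D := by rw [inv, dif_neg h, dif_neg h']
      rw [e, e]

theorem exists_assoc {n : ℕ} {D : Grid n} (h : IsCNAT D) :
    ∃ π : Equiv.Perm (Fin n), IsAssocPerm D π := by
  classical
  have hl : ∀ i, ∃ j, IsLeaf D i j := by
    intro i
    obtain ⟨j0, hj0⟩ := h.2.2.1 i
    obtain ⟨j, hj, hmax⟩ := Finset.exists_max_image
      (Finset.univ.filter fun j => Dotted D i j) id ⟨j0, by simpa using hj0⟩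
    have hj' : Dotted D i j := by simpa using hj
    have hr : ¬HasDotRight D i j := by
      rintro ⟨j', h1, h2⟩
      exact absurd (hmax j' (by simpa using h2)) (not_le.2 h1)
    rcases h.2.2.2.2 i j hj' with ⟨_, a⟩ | ⟨a, _⟩
    · exact absurd a hr
    · exact ⟨j, hj', a, hr⟩
  choose f hf using hl
  have hinj : Function.Injective f := by
    intro a b hab
    by_contra hne
    rcases lt_or_gt_of_ne hne with hlt | hlt
    · exact (hf a).2.1 ⟨b, hlt, hab ▸ (hf b).1⟩
    · exact (hf b).2.1 ⟨a, hlt, hab ▸ (hf a).1⟩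
  exact ⟨Equiv.ofBijective f (Finite.injective_iff_bijective.1 hinj), fun i => hf i⟩

theorem assoc_unique {n : ℕ} {D : Grid n} {π ρ : Equiv.Perm (Fin n)}
    (h : IsAssocPerm D π) (h' : IsAssocPerm D ρ) : π = ρ := by
  ext1 i
  by_contra hne
  rcases lt_or_gt_of_ne hne with hlt | hlt
  · exact (h i).2.2 ⟨_, hlt, (h' i).1⟩
  · exact (h' i).2.2 ⟨_, hlt, (h i).1⟩

/-- Row `i` contains exactly one dot at most. -/
def Single {n : ℕ} (D : Grid n) (i : Fin n) : Prop :=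
  ∀ j j', Dotted D i j → Dotted D i j' → j = j'

theorem root_internal {n : ℕ} {D : Grid n} (h : IsCNAT D) (hn : 1 < n) (z : Fin n)
    (hz : (z : ℕ) = 0) : HasDotBelow D z z ∧ HasDotRight D z z := by
  classical
  obtain ⟨h1, h2, h3, h4, h5⟩ := h
  rcases h5 z z (h1 z z hz hz) with hh | hh
  · exact hh
  exfalso
  have main : ∀ N : ℕ, ∀ i j : Fin n, (i : ℕ) + j = N → Dotted D i j → i = z ∧ j = z := by
    intro N
    induction N using Nat.strong_induction_on with
    | _ N ih =>
      intro i j hN hd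
      by_cases hij : (i : ℕ) = 0 ∧ (j : ℕ) = 0
      · exact ⟨Fin.ext (by omega), Fin.ext (by omega)⟩
      · exfalso
        rcases h2 i j hd hij with ⟨⟨i', a, b⟩, _⟩ | ⟨⟨j', a, b⟩, _⟩
        · have a' : (i' : ℕ) < i := a
          obtain ⟨e1, e2⟩ := ih _ (by omega) i' j rfl b
          subst e2
          exact hh.1 ⟨i, e1 ▸ a, hd⟩
        · have a' : (j' : ℕ) < j := a
          obtain ⟨e1, e2⟩ := ih _ (by omega) i j' rfl b
          subst e1
          exact hh.2 ⟨j, e2 ▸ a, hd⟩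
  obtain ⟨j, hj⟩ := h3 ⟨1, hn⟩
  have := (main _ _ _ rfl hj).1
  rw [Fin.ext_iff] at this
  simp only [hz] at this
  omega

open Classical in
theorem single_card {m : ℕ} {D : Grid (2 * m + 1)} (hm : 0 < m) (h : IsCNAT D)
    (hg : ¬ ∃ k, GoodRow D k) : (Finset.univ.filter fun i => Single D i).card ≤ m := by
  have hsub : (Finset.univ.filter fun i => Single D i) ⊆ Finset.univ.image (pb (m := m)) := by
    intro i hi
    have hs : Single D i := by simpa using hi
    have key : ∀ j, Dotted D i j → ¬HasDotBelow D i j := by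
      intro j hj hb
      rcases h.2.2.2.2 i j hj with ⟨_, ⟨j', a, b⟩⟩ | ⟨a, _⟩
      · exact (ne_of_lt a) (hs _ _ hj b)
      · exact a hb
    by_cases h0 : (i : ℕ) = 0
    · exact absurd (root_internal h (by omega) i h0).1 (key _ (h.1 _ _ h0 h0))
    rcases Nat.even_or_odd' (i : ℕ) with ⟨c, hc | hc⟩
    · have := i.2
      refine Finset.mem_image.2 ⟨⟨c - 1, by omega⟩, Finset.mem_univ _, Fin.ext ?_⟩
      simp only [pb]
      omega
    · exfalso
      apply hg
      have := i.2
      refine ⟨⟨c, by omega⟩, fun j hj => ?_⟩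
      have e : pa (m := m) ⟨c, by omega⟩ = i := Fin.ext (by simp only [pa]; omega)
      refine key j (e ▸ hj.1) ⟨_, ?_, hj.2⟩
      rw [Fin.lt_def]
      simp only [pb]
      omega
  calc _ ≤ _ := Finset.card_le_card hsub
    _ ≤ _ := Finset.card_image_le
    _ = m := by simp

theorem exists_good {m : ℕ} {D : Grid (2 * m + 1)} (hm : 0 < m) (h : IsCNAT D)
    (hg : ¬ ∃ k, GoodRow D k) : ∃ k, GoodRow (tr D) k := by
  classical
  by_contra hg'
  have c1 := single_card hm h hg
  have c2 := single_card hm (tr_cnat h) hg'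
  obtain ⟨π, hπ⟩ := exists_assoc h
  have cov : (Finset.univ : Finset (Fin (2 * m + 1))) ⊆
      (Finset.univ.filter fun i => Single D i) ∪
      (Finset.univ.filter fun i => Single (tr D) i).image π.symm := by
    intro i _
    obtain ⟨hd, hb, hr⟩ := hπ i
    have hno : ¬ (HasDotAbove D i (π i) ∧ HasDotLeft D i (π i)) := by
      rintro ⟨ha, hl⟩
      by_cases hz : (i : ℕ) = 0 ∧ (π i : ℕ) = 0
      · obtain ⟨i', a, _⟩ := ha
        have a' : (i' : ℕ) < i := a
        omega
      · rcases h.2.1 i (π i) hd hz with ⟨_, b⟩ | ⟨_, b⟩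
        · exact b hl
        · exact b ha
    rw [Finset.mem_union]
    by_cases hl : HasDotLeft D i (π i)
    · right
      refine Finset.mem_image.2 ⟨π i, ?_, by simp⟩
      have ha : ¬HasDotAbove D i (π i) := fun ha => hno ⟨ha, hl⟩
      have : ∀ i', Dotted D i' (π i) → i' = i := by
        intro i' hi'
        rcases lt_trichotomy i' i with a | a | a
        · exact absurd ⟨i', a, hi'⟩ ha
        · exact a
        · exact absurd ⟨i', a, hi'⟩ hb
      simp only [Finset.mem_filter, Finset.mem_univ, true_and]
      intro x y hx hy
      rw [this x hx, this y hy]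
    · left
      have : ∀ j', Dotted D i j' → j' = π i := by
        intro j' hj'
        rcases lt_trichotomy j' (π i) with a | a | a
        · exact absurd ⟨j', a, hj'⟩ hl
        · exact a
        · exact absurd ⟨j', a, hj'⟩ hr
      simp only [Finset.mem_filter, Finset.mem_univ, true_and]
      intro x y hx hy
      rw [this x hx, this y hy]
  have c3 := (Finset.card_le_card cov).trans (Finset.card_union_le _ _)
  have c4 := Finset.card_image_le (s := Finset.univ.filter fun i => Single (tr D) i)
    (f := π.symm)
  rw [Finset.card_univ, Fintype.card_fin] at c3
  omega

theorem pa_ne_pb {m : ℕ} (k : Fin m) : pa k ≠ pb k := by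
  simp [pa, pb]

theorem inv_spec {m : ℕ} {D : Grid (2 * m + 1)} (hm : 0 < m) (h : IsCNAT D) :
    IsCNAT (inv D) ∧ ∀ π, IsAssocPerm D π →
      ∃ ρ, IsAssocPerm (inv D) ρ ∧ Equiv.Perm.sign ρ = - Equiv.Perm.sign π := by
  by_cases hg : ∃ k, GoodRow D k
  · have e : inv D = rowSwap (pa hg.choose) (pb hg.choose) D := by simp only [inv, dif_pos hg]
    rw [e]
    refine ⟨rowSwap_cnat (by simp [pa]) (by simp [pa, pb]) hg.choose_spec h, fun π hπ =>
      ⟨_, rowSwap_assoc (by simp [pa, pb]) hg.choose_spec hπ, ?_⟩⟩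
    rw [Equiv.Perm.sign_mul, Equiv.Perm.sign_swap (pa_ne_pb _), mul_neg, mul_one]
  · have hg' := exists_good hm h hg
    have e : inv D = tr (rowSwap (pa hg'.choose) (pb hg'.choose) (tr D)) := by
      rw [inv, dif_neg hg, dif_pos hg']
    rw [e]
    refine ⟨tr_cnat (rowSwap_cnat (by simp [pa]) (by simp [pa, pb]) hg'.choose_spec (tr_cnat h)),
      fun π hπ =>
      ⟨_, tr_assoc (rowSwap_assoc (by simp [pa, pb]) hg'.choose_spec (tr_assoc hπ)), ?_⟩⟩
    rw [Equiv.Perm.sign_inv, Equiv.Perm.sign_mul, Equiv.Perm.sign_swap (pa_ne_pb _), mul_neg,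
      mul_one, Equiv.Perm.sign_inv]

/-- For every odd `n > 1`, the number of CNATs of size `n`
whose associated permutation has sign `+1` equals the number of those whose
associated permutation has sign `-1`, and both equal `Tₙ / 2`. -/
theorem cnat_sign_equidistributed_odd (n : ℕ) (hn : 1 < n) (hodd : Odd n) :
    Nat.card {D : Grid n // IsCNAT D ∧
        ∃ π : Equiv.Perm (Fin n), IsAssocPerm D π ∧ Equiv.Perm.sign π = 1}
      = Nat.card {D : Grid n // IsCNAT D ∧
        ∃ π : Equiv.Perm (Fin n), IsAssocPerm D π ∧ Equiv.Perm.sign π = -1} ∧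
    2 * Nat.card {D : Grid n // IsCNAT D ∧
        ∃ π : Equiv.Perm (Fin n), IsAssocPerm D π ∧ Equiv.Perm.sign π = 1}
      = Nat.card {D : Grid n // IsCNAT D} ∧
    2 * Nat.card {D : Grid n // IsCNAT D ∧
        ∃ π : Equiv.Perm (Fin n), IsAssocPerm D π ∧ Equiv.Perm.sign π = -1}
      = Nat.card {D : Grid n // IsCNAT D} := by
  obtain ⟨m, rfl⟩ := hodd
  have hm : 0 < m := by omega
  have step : ∀ (ε : ℤˣ) (D : Grid (2 * m + 1)), (IsCNAT D ∧
        ∃ π : Equiv.Perm (Fin (2 * m + 1)), IsAssocPerm D π ∧ Equiv.Perm.sign π = ε) →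
      (IsCNAT (inv D) ∧
        ∃ π : Equiv.Perm (Fin (2 * m + 1)), IsAssocPerm (inv D) π ∧
          Equiv.Perm.sign π = -ε) := by
    rintro ε D ⟨h, π, hπ, rfl⟩
    exact ⟨(inv_spec hm h).1, (inv_spec hm h).2 π hπ⟩
  have heq : Nat.card {D : Grid (2 * m + 1) // IsCNAT D ∧
        ∃ π : Equiv.Perm (Fin (2 * m + 1)), IsAssocPerm D π ∧ Equiv.Perm.sign π = 1}
      = Nat.card {D : Grid (2 * m + 1) // IsCNAT D ∧
        ∃ π : Equiv.Perm (Fin (2 * m + 1)), IsAssocPerm D π ∧ Equiv.Perm.sign π = -1} :=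
    Nat.card_congr
      { toFun := fun D => ⟨inv D.1, step 1 D.1 D.2⟩
        invFun := fun D => ⟨inv D.1, by simpa using step (-1) D.1 D.2⟩
        left_inv := fun D => Subtype.ext (inv_inv D.1)
        right_inv := fun D => Subtype.ext (inv_inv D.1) }
  have hsum : Nat.card {D : Grid (2 * m + 1) // IsCNAT D}
      = Nat.card {D : Grid (2 * m + 1) // IsCNAT D ∧
        ∃ π : Equiv.Perm (Fin (2 * m + 1)), IsAssocPerm D π ∧ Equiv.Perm.sign π = 1}
      + Nat.card {D : Grid (2 * m + 1) // IsCNAT D ∧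
        ∃ π : Equiv.Perm (Fin (2 * m + 1)), IsAssocPerm D π ∧ Equiv.Perm.sign π = -1} := by
    classical
    simp only [Nat.card_eq_fintype_card, Fintype.card_subtype]
    rw [← Finset.card_union_of_disjoint]
    · congr 1
      ext D
      simp only [Finset.mem_filter, Finset.mem_univ, true_and, Finset.mem_union]
      constructor
      · intro h
        obtain ⟨π, hπ⟩ := exists_assoc h
        rcases Int.units_eq_one_or (Equiv.Perm.sign π) with e | e
        · exact Or.inl ⟨h, π, hπ, e⟩
        · exact Or.inr ⟨h, π, hπ, e⟩
      · rintro (h | h)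
        · exact h.1
        · exact h.1
    · rw [Finset.disjoint_left]
      intro D h1 h2
      simp only [Finset.mem_filter, Finset.mem_univ, true_and] at h1 h2
      obtain ⟨_, π, hπ, e⟩ := h1
      obtain ⟨_, ρ, hρ, e'⟩ := h2
      rw [assoc_unique hπ hρ, e'] at e
      exact absurd e (by decide)
  refine ⟨heq, ?_, ?_⟩ <;> omega

end CNATf
end

section
/- For every CNAT T of size n, the determinant of the n×n integer matrix M(T), whose (i,j) entry is 1 if cell (i,j) of T is dotted and 0 otherwise, equals the sign of the associated permutation π(T). -/
/-!
Formalization of complete non-ambiguous trees (CNATs).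

A CNAT of size `n` is modelled as a Boolean filling `D : Fin n → Fin n → Bool`
of the `n × n` grid (`D i j = true` meaning that cell in row `i`, column `j`
is dotted; rows are numbered from the top, columns from the left, `0`-based),
satisfying the root, non-ambiguity, minimality and completeness conditions.
-/

namespace CNATf

/-- For every CNAT `T` of size `n`, the determinant of the
`n × n` integer matrix `M(T)` (with entry `1` in dotted cells and `0`
elsewhere) equals the sign of the associated permutation `π(T)`. -/
theorem cnat_det_eq_sign (n : ℕ) (D : Grid n) (hD : IsCNAT D)
    (π : Equiv.Perm (Fin n)) (hπ : IsAssocPerm D π) :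
    (Matrix.of fun i j : Fin n => if D i j then (1 : ℤ) else 0).det
      = Equiv.Perm.sign π := by
  have key : ((Matrix.of fun i j : Fin n => if D i j then (1 : ℤ) else 0).submatrix id π).det
      = 1 := by
    rw [Matrix.det_of_upperTriangular]
    · apply Finset.prod_eq_one
      intro i _
      have h : D i (π i) = true := (hπ i).1
      simp [h]
    · intro i k hik
      have hik' : k < i := hik
      have h : ¬ (D i (π k) = true) := fun h => (hπ k).2.1 ⟨i, hik', h⟩
      simp [h]
  rw [Matrix.det_permute'] at key
  rcases Int.units_eq_one_or (Equiv.Perm.sign π) with h | h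
  · rw [h] at key ⊢
    simpa using key
  · rw [h] at key ⊢
    simp only [Units.val_neg, Units.val_one, Int.reduceNeg] at key ⊢
    push_cast at key
    linarith


end CNATf
end

section
/- In every CNAT of size n, every row contains exactly one leaf and every column contains exactly one leaf; consequently the set of leaves is the graph of a permutation of {1,…,n}. -/
/-!
Formalization of complete non-ambiguous trees (CNATs).

A CNAT of size `n` is modelled as a Boolean filling `D : Fin n → Fin n → Bool`
of the `n × n` grid (`D i j = true` meaning that cell in row `i`, column `j`
is dotted; rows are numbered from the top, columns from the left, `0`-based),
satisfying the root, non-ambiguity, minimality and completeness conditions.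
-/

namespace CNATf

/-- In every CNAT of size `n`, every row contains exactly one
leaf and every column contains exactly one leaf; consequently the set of
leaves is the graph of a permutation of `{1, …, n}`. -/
theorem cnat_leaves_form_perm (n : ℕ) (D : Grid n) (hD : IsCNAT D) :
    (∀ i : Fin n, ∃! j : Fin n, IsLeaf D i j) ∧
    (∀ j : Fin n, ∃! i : Fin n, IsLeaf D i j) ∧
    ∃ π : Equiv.Perm (Fin n), ∀ i j : Fin n, IsLeaf D i j ↔ π i = j := by
  obtain ⟨-, -, hrow, hcol, hcomp⟩ := hD
  have hr : ∀ i : Fin n, ∃! j : Fin n, IsLeaf D i j := by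
    intro i
    obtain ⟨j, hj, hmax⟩ := Set.exists_max_image {j : Fin n | Dotted D i j} id
      (Set.toFinite _) (hrow i)
    have hnr : ¬HasDotRight D i j := by
      rintro ⟨k, hk, hd⟩
      exact absurd (hmax k hd) (not_le.mpr hk)
    have hnb : ¬HasDotBelow D i j := by
      rcases hcomp i j hj with h | h
      · exact absurd h.2 hnr
      · exact h.1
    refine ⟨j, ⟨hj, hnb, hnr⟩, ?_⟩
    rintro k ⟨hk, -, hkr⟩
    rcases lt_trichotomy k j with h | h | h
    · exact absurd ⟨j, h, hj⟩ hkr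
    · exact h
    · exact absurd ⟨k, h, hk⟩ hnr
  have hc : ∀ j : Fin n, ∃! i : Fin n, IsLeaf D i j := by
    intro j
    obtain ⟨i, hi, hmax⟩ := Set.exists_max_image {i : Fin n | Dotted D i j} id
      (Set.toFinite _) (hcol j)
    have hnb : ¬HasDotBelow D i j := by
      rintro ⟨k, hk, hd⟩
      exact absurd (hmax k hd) (not_le.mpr hk)
    have hnr : ¬HasDotRight D i j := by
      rcases hcomp i j hi with h | h
      · exact absurd h.1 hnb
      · exact h.2
    refine ⟨i, ⟨hi, hnb, hnr⟩, ?_⟩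
    rintro k ⟨hk, hkb, -⟩
    rcases lt_trichotomy k i with h | h | h
    · exact absurd ⟨i, h, hi⟩ hkb
    · exact h
    · exact absurd ⟨k, h, hk⟩ hnb
  refine ⟨hr, hc, ?_⟩
  choose f hf hfu using hr
  choose g hg hgu using hc
  refine ⟨⟨f, g, fun i => (hgu (f i) i (hf i)).symm, fun j => (hfu (g j) j (hg j)).symm⟩, ?_⟩
  intro i j
  constructor
  · intro h
    exact (hfu i j h).symm
  · rintro rfl
    exact hf i

end CNATf
end

section
/- Let T be a CNAT which has an internal dot whose two children are a leaf and an internal dot. Then T contains at least one long leaf. -/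
/-!
Formalization of complete non-ambiguous trees (CNATs).

A CNAT of size `n` is modelled as a Boolean filling `D : Fin n → Fin n → Bool`
of the `n × n` grid (`D i j = true` meaning that cell in row `i`, column `j`
is dotted; rows are numbered from the top, columns from the left, `0`-based),
satisfying the root, non-ambiguity, minimality and completeness conditions.
-/

namespace CNATf

theorem asc_aux (F : ℕ → ℕ → Prop) (n : ℕ) (hb : ∀ x y, F x y → x < n)
    (hA : ∀ x y y', y < y' → F x y → F x y' → ∃ e, y' ≤ e + 1 ∧ F x e ∧ F x (e+1) ∧
      (∀ z, e + 1 < z → ¬ F x z) ∧ (∀ z, x < z → ¬ F z (e+1)))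
    (hB : ∀ x x' y, x < x' → F x y → F x' y → ∃ e, x' ≤ e + 1 ∧ F e y ∧ F (e+1) y ∧
      (∀ z, y < z → ¬ F (e+1) z) ∧ (∀ z, e + 1 < z → ¬ F z y))
    (hR : ∀ x x' y, F x y → x < x' → F x' y → ∃ y', y < y' ∧ F x y')
    (hL : ∀ x y y', F x y → y < y' → F x y' → ∃ x', x < x' ∧ F x' y) :
    (∀ k a e, n - a ≤ k → F a e → F a (e+1) → (∀ z, a < z → ¬ F z (e+1)) →
      (∀ z, e ≤ z → ¬ F (a+1) z) → False) ∧
    (∀ a b, F a b → F (a+1) b → (∀ z, b < z → ¬ F (a+1) z) →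
      (∀ z, a ≤ z → ¬ F z (b+1)) → ∃ e, b < e ∧ F a e ∧ F a (e+1) ∧
        (∀ z, a < z → ¬ F z (e+1)) ∧ (∀ z, e ≤ z → ¬ F (a+1) z)) := by
  have hP : ∀ a b, F a b → F (a+1) b → (∀ z, b < z → ¬ F (a+1) z) →
      (∀ z, a ≤ z → ¬ F z (b+1)) → ∃ e, b < e ∧ F a e ∧ F a (e+1) ∧
        (∀ z, a < z → ¬ F z (e+1)) ∧ (∀ z, e ≤ z → ¬ F (a+1) z) := by
    intro a b h1 h2 h3 h4
    obtain ⟨c, hc, hF⟩ := hR a (a+1) b h1 (by omega) h2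
    obtain ⟨e, he, e1, e2, e3, e4⟩ := hA a b c hc h1 hF
    have hne : e ≠ b := by
      rintro rfl
      exact h4 a le_rfl e2
    exact ⟨e, by omega, e1, e2, e4, fun z hz => h3 z (by omega)⟩
  refine ⟨?_, hP⟩
  intro k
  induction k with
  | zero =>
    intro a e hk h1 _ _ _
    have := hb _ _ h1
    omega
  | succ k ih =>
    intro a e hk h1 h2 h3 h4
    obtain ⟨x', hx, hF⟩ := hL a e (e+1) h1 (by omega) h2
    obtain ⟨s, hs, s1, s2, s3, s4⟩ := hB a x' e hx h1 hF
    have hne : s ≠ a := by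
      rintro rfl
      exact h4 e le_rfl s2
    obtain ⟨e', he', q1, q2, q3, q4⟩ := hP s e s1 s2 s3 (fun z hz => h3 z (by omega))
    have := hb _ _ h1
    exact ih s e' (by omega) q1 q2 q3 q4

def FF {n : ℕ} (D : Grid n) (x y : ℕ) : Prop :=
  ∃ (hx : x < n) (hy : y < n), Dotted D ⟨x, hx⟩ ⟨y, hy⟩

theorem exists_last (n : ℕ) (P : ℕ → Prop) (hb : ∀ x, P x → x < n) (x : ℕ) (hx : P x) :
    ∃ m, x ≤ m ∧ P m ∧ ∀ z, m < z → ¬ P z := by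
  classical
  refine ⟨Nat.findGreatest P n, Nat.le_findGreatest (hb x hx).le hx,
    Nat.findGreatest_spec (hb x hx).le hx, fun z hz hp => ?_⟩
  exact Nat.findGreatest_is_greatest hz (hb z hp).le hp

theorem short_row {n : ℕ} (D : Grid n) (hD : IsCNAT D)
    (hs : ∀ l : Fin n × Fin n, ¬ IsLongLeaf D l) (x y y' : ℕ) (hlt : y < y')
    (h1 : FF D x y) (h2 : FF D x y') : ∃ e, y' ≤ e + 1 ∧ FF D x e ∧ FF D x (e+1) ∧
      (∀ z, e + 1 < z → ¬ FF D x z) ∧ (∀ z, x < z → ¬ FF D z (e+1)) := by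
  obtain ⟨m, hm, hFm, hlast⟩ := exists_last n (FF D x) (fun z hz => hz.2.1) y' h2
  obtain ⟨hx, hmn, hd⟩ := hFm
  obtain ⟨_, hy, hd1⟩ := h1
  obtain ⟨_, hNA, _, _, hC⟩ := hD
  have hr : ¬ HasDotRight D ⟨x, hx⟩ ⟨m, hmn⟩ := by
    rintro ⟨j, hj, hjd⟩
    exact hlast j hj ⟨hx, j.2, hjd⟩
  have hbel : ¬ HasDotBelow D ⟨x, hx⟩ ⟨m, hmn⟩ := by
    have := hC _ _ hd
    tauto
  have hleft : HasDotLeft D ⟨x, hx⟩ ⟨m, hmn⟩ := ⟨⟨y, hy⟩, Fin.mk_lt_mk.2 (by omega), hd1⟩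
  have hab : ¬ HasDotAbove D ⟨x, hx⟩ ⟨m, hmn⟩ := by
    have := hNA _ _ hd (by simp only; omega)
    rcases this with h | h
    · exact absurd hleft h.2
    · exact h.2
  have hsh : IsShortLeaf D (⟨x, hx⟩, ⟨m, hmn⟩) := by
    by_contra hc
    exact hs _ ⟨⟨hd, hbel, hr⟩, hc⟩
  obtain ⟨_, ⟨⟨px, hpx⟩, ⟨py, hpy⟩⟩, hp, hadj⟩ := hsh
  rcases hp with ⟨e1, e2, e3, _⟩ | ⟨e1, e2, e3, _⟩
  · simp only at e1 e2 e3
    rw [e1] at e3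
    exact absurd ⟨_, e2, e3⟩ hab
  · simp only [Fin.mk.injEq, Fin.mk_lt_mk] at e1 e2 e3 hadj
    subst e1
    have hpm : py + 1 = m := by omega
    subst hpm
    refine ⟨py, hm, ⟨hx, hpy, e3⟩, ⟨hx, hmn, hd⟩, hlast, ?_⟩
    rintro z hz ⟨hzn, _, hzd⟩
    exact hbel ⟨⟨z, hzn⟩, hz, hzd⟩

theorem short_col {n : ℕ} (D : Grid n) (hD : IsCNAT D)
    (hs : ∀ l : Fin n × Fin n, ¬ IsLongLeaf D l) (x x' y : ℕ) (hlt : x < x')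
    (h1 : FF D x y) (h2 : FF D x' y) : ∃ e, x' ≤ e + 1 ∧ FF D e y ∧ FF D (e+1) y ∧
      (∀ z, y < z → ¬ FF D (e+1) z) ∧ (∀ z, e + 1 < z → ¬ FF D z y) := by
  obtain ⟨m, hm, hFm, hlast⟩ := exists_last n (fun z => FF D z y) (fun z hz => hz.1) x' h2
  obtain ⟨hmn, hy, hd⟩ := hFm
  obtain ⟨hx, _, hd1⟩ := h1
  obtain ⟨_, hNA, _, _, hC⟩ := hD
  have hbel : ¬ HasDotBelow D ⟨m, hmn⟩ ⟨y, hy⟩ := by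
    rintro ⟨j, hj, hjd⟩
    exact hlast j hj ⟨j.2, hy, hjd⟩
  have hr : ¬ HasDotRight D ⟨m, hmn⟩ ⟨y, hy⟩ := by
    have := hC _ _ hd
    tauto
  have hab : HasDotAbove D ⟨m, hmn⟩ ⟨y, hy⟩ := ⟨⟨x, hx⟩, Fin.mk_lt_mk.2 (by omega), hd1⟩
  have hsh : IsShortLeaf D (⟨m, hmn⟩, ⟨y, hy⟩) := by
    by_contra hc
    exact hs _ ⟨⟨hd, hbel, hr⟩, hc⟩
  obtain ⟨_, ⟨⟨px, hpx⟩, ⟨py, hpy⟩⟩, hp, hadj⟩ := hsh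
  rcases hp with ⟨e1, e2, e3, _⟩ | ⟨_, _, _, _, e4⟩
  · simp only [Fin.mk.injEq, Fin.mk_lt_mk] at e1 e2 e3 hadj
    subst e1
    have hpm : px + 1 = m := by omega
    subst hpm
    refine ⟨px, hm, ⟨hpx, hy, e3⟩, ⟨hmn, hy, hd⟩, ?_, hlast⟩
    rintro z hz ⟨_, hzn, hzd⟩
    exact hr ⟨⟨z, hzn⟩, hz, hzd⟩
  · exact absurd hab e4

/-- Let `T` be a CNAT which has an internal dot whose two
children are a leaf and an internal dot. Then `T` contains at least one long
leaf. -/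
theorem cnat_mixed_children_long_leaf (n : ℕ) (D : Grid n) (hD : IsCNAT D)
    (h : ∃ d c₁ c₂ : Fin n × Fin n, IsInternal D d.1 d.2 ∧
        IsLeftChild D d c₁ ∧ IsRightChild D d c₂ ∧
        ((IsLeaf D c₁.1 c₁.2 ∧ IsInternal D c₂.1 c₂.2) ∨
         (IsInternal D c₁.1 c₁.2 ∧ IsLeaf D c₂.1 c₂.2))) :
    ∃ l : Fin n × Fin n, IsLongLeaf D l := by
  by_contra hno
  have hs : ∀ l : Fin n × Fin n, ¬ IsLongLeaf D l := fun l hl => hno ⟨l, hl⟩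
  have hA := short_row D hD hs
  have hB := short_col D hD hs
  have hC := hD.2.2.2.2
  have hNA := hD.2.1
  obtain ⟨hQ, hP⟩ := asc_aux (FF D) n (fun x y h => h.1) hA hB
    (by
      rintro x x' y ⟨hx, hy, hd⟩ hlt ⟨hx', _, hd'⟩
      rcases hC _ _ hd with ⟨_, j, hj, hjd⟩ | h'
      · exact ⟨j, hj, hx, j.2, hjd⟩
      · exact absurd ⟨⟨x', hx'⟩, hlt, hd'⟩ h'.1)
    (by
      rintro x y y' ⟨hx, hy, hd⟩ hlt ⟨_, hy', hd'⟩
      rcases hC _ _ hd with ⟨⟨j, hj, hjd⟩, _⟩ | h'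
      · exact ⟨j, hj, j.2, hy, hjd⟩
      · exact absurd ⟨⟨y', hy'⟩, hlt, hd'⟩ h'.2)
  obtain ⟨⟨⟨i, hi⟩, ⟨j, hj⟩⟩, ⟨⟨i1, hi1⟩, ⟨j1, hj1⟩⟩, ⟨⟨i2, hi2⟩, ⟨j2, hj2⟩⟩,
    ⟨hd, -, -⟩, ⟨a1, a2, a3, a4⟩, ⟨b1, b2, b3, b4⟩, hcase⟩ := h
  simp only [Fin.mk.injEq, Fin.mk_lt_mk] at hd a1 a2 a3 a4 b1 b2 b3 b4 hcase
  subst a1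
  subst b1
  have fd : FF D i2 j1 := ⟨hi, hj, hd⟩
  have f1 : FF D i1 j1 := ⟨hi1, hj, a3⟩
  have f2 : FF D i2 j2 := ⟨hi, hj2, b3⟩
  rcases hcase with ⟨hl, hin⟩ | ⟨hin, hl⟩
  · -- left child leaf, right child internal
    obtain ⟨-, -, ⟨⟨c, hc⟩, hc1, hc2⟩⟩ := hin
    obtain ⟨s, s0, s1, s2, s3, s4⟩ := hB _ _ _ a2 fd f1
    have hs1 : s + 1 = i1 := by
      by_contra hne
      exact hl.2.1 ⟨⟨s+1, s2.1⟩, Fin.mk_lt_mk.2 (by omega), s2.2.2⟩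
    have hs2 : s = i2 := by
      by_contra hne
      exact a4 ⟨s, s1.1⟩ (Fin.mk_lt_mk.2 (by omega)) (Fin.mk_lt_mk.2 (by omega)) s1.2.2
    subst hs2
    obtain ⟨e, e0, e1, e2, e3, e4⟩ := hA s j1 c (lt_trans b2 hc1) fd ⟨hi, hc, hc2⟩
    have hc1' : j2 < c := hc1
    exact hQ _ s e le_rfl e1 e2 e4 (fun z hz => s3 z (by omega))
  · obtain ⟨-, ⟨⟨c, hc⟩, hc1, hc2⟩, -⟩ := hin
    have hc1' : i1 < c := hc1
    obtain ⟨e, e0, e1, e2, e3, e4⟩ := hA _ _ _ b2 fd f2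
    have hs1 : e + 1 = j2 := by
      by_contra hne
      exact hl.2.2 ⟨⟨e+1, e2.2.1⟩, Fin.mk_lt_mk.2 (by omega), e2.2.2⟩
    have hs2 : e = j1 := by
      by_contra hne
      exact b4 ⟨e, e1.2.1⟩ (Fin.mk_lt_mk.2 (by omega)) (Fin.mk_lt_mk.2 (by omega)) e1.2.2
    subst hs2
    obtain ⟨s, s0, s1, s2, s3, s4⟩ := hB i2 c e (by omega) fd ⟨hc, hj, hc2⟩
    obtain ⟨q, _, q1, q2, q3, q4⟩ := hP s e s1 s2 s3 (fun z hz => e4 z (by omega))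
    exact hQ _ s q le_rfl q1 q2 q3 q4

end CNATf
end

section
/- For every integer p ≥ 1, the set A_{2p} of CNATs of size 2p all of whose leaves are short is in bijection with the set of CNATs of size p; in particular |A_{2p}| = T_p. -/
/-!
Formalization of complete non-ambiguous trees (CNATs).

A CNAT of size `n` is modelled as a Boolean filling `D : Fin n → Fin n → Bool`
of the `n × n` grid (`D i j = true` meaning that cell in row `i`, column `j`
is dotted; rows are numbered from the top, columns from the left, `0`-based),
satisfying the root, non-ambiguity, minimality and completeness conditions.
-/

namespace CNATf

/-- Transposed grid. -/
def transp {n : ℕ} (D : Grid n) : Grid n := fun i j => D j i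

/-- A simpler form of the short leaves condition. -/
def Short' {n : ℕ} (D : Grid n) : Prop :=
  ∀ i j : Fin n, IsLeaf D i j →
    (∃ i' : Fin n, (i' : ℕ) + 1 = i ∧ Dotted D i' j) ∨
    (∃ j' : Fin n, (j' : ℕ) + 1 = j ∧ Dotted D i j')

lemma short_iff {n : ℕ} {D : Grid n} (h : IsCNAT D) : AllLeavesShort D ↔ Short' D := by
  constructor
  · intro hs i j hl
    obtain ⟨-, ⟨p1, p2⟩, hp, hadj⟩ := hs (i, j) hl
    have hd : Dotted D p1 p2 := by
      rcases hp with hp | hp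
      · exact hp.2.2.1
      · exact hp.2.2.1
    rcases hadj with ⟨h1, h2⟩ | ⟨h1, h2⟩
    · left; simp only at h1 h2; subst h2; exact ⟨p1, h1, hd⟩
    · right; simp only at h1 h2; subst h2; exact ⟨p2, h1, hd⟩
  · rintro hs ⟨i, j⟩ hl
    refine ⟨hl, ?_⟩
    simp only at hl
    rcases hs i j hl with ⟨i', h1, h2⟩ | ⟨j', h1, h2⟩
    · refine ⟨(i', j), Or.inl ⟨rfl, ?_, h2, ?_⟩, Or.inl ⟨h1, rfl⟩⟩
      · simp only [Fin.lt_def]; omega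
      · intro k hk hk'; simp only [Fin.lt_def] at hk hk'; omega
    · have hlt : j' < j := by simp only [Fin.lt_def]; omega
      refine ⟨(i, j'), Or.inr ⟨rfl, hlt, h2, ?_, ?_⟩, Or.inr ⟨h1, rfl⟩⟩
      · intro k hk hk'; simp only [Fin.lt_def] at hk hk'; omega
      · rcases h.2.1 i j hl.1 (by omega) with hx | hx
        · exact absurd ⟨j', hlt, h2⟩ hx.2
        · exact hx.2

lemma transp_leaf {n : ℕ} {D : Grid n} {i j : Fin n} :
    IsLeaf (transp D) i j ↔ IsLeaf D j i := by
  unfold IsLeaf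
  constructor
  · rintro ⟨a, b, c⟩; exact ⟨a, c, b⟩
  · rintro ⟨a, b, c⟩; exact ⟨a, c, b⟩

lemma transp_cnat {n : ℕ} {D : Grid n} (h : IsCNAT D) : IsCNAT (transp D) := by
  obtain ⟨h1, h2, h3, h4, h5⟩ := h
  refine ⟨fun i j a b => h1 j i b a, fun i j a b => ?_, h4, h3, fun i j a => ?_⟩
  · exact (h2 j i a (fun c => b ⟨c.2, c.1⟩)).symm
  · rcases h5 j i a with c | c
    · exact Or.inl ⟨c.2, c.1⟩
    · exact Or.inr ⟨c.2, c.1⟩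

lemma transp_short {n : ℕ} {D : Grid n} (h : Short' D) : Short' (transp D) := by
  intro i j hl
  exact (h j i (transp_leaf.1 hl)).symm

lemma exists_leaf_row {n : ℕ} {D : Grid n} (h : IsCNAT D) (i : Fin n) :
    ∃ j, IsLeaf D i j := by
  classical
  obtain ⟨j0, hj0⟩ := h.2.2.1 i
  obtain ⟨j, hj, hmax⟩ := (Finset.univ.filter (fun j => Dotted D i j)).exists_max_image id
    ⟨j0, by simpa using hj0⟩
  simp only [Finset.mem_filter, Finset.mem_univ, true_and, id] at hj hmax
  have hr : ¬ HasDotRight D i j := by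
    rintro ⟨j', h1, h2⟩
    exact absurd (hmax j' h2) (not_le.2 h1)
  refine ⟨j, hj, ?_, hr⟩
  rcases h.2.2.2.2 i j hj with c | c
  · exact absurd c.2 hr
  · exact c.1

lemma leaf_row_unique {n : ℕ} {D : Grid n} {i j j' : Fin n} (h : IsLeaf D i j)
    (h' : IsLeaf D i j') : j = j' := by
  rcases lt_trichotomy j j' with c | c | c
  · exact absurd ⟨j', c, h'.1⟩ h.2.2
  · exact c
  · exact absurd ⟨j, c, h.1⟩ h'.2.2

lemma leaf_col_unique {n : ℕ} {D : Grid n} {i i' j : Fin n} (h : IsLeaf D i j)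
    (hh : IsLeaf D i' j) : i = i' :=
  leaf_row_unique (transp_leaf.2 h) (transp_leaf.2 hh)

/-- The leaf of row `i` is a left leaf. -/
def RowLeft {n : ℕ} (D : Grid n) (i : Fin n) : Prop :=
  ∃ j i' : Fin n, IsLeaf D i j ∧ (i' : ℕ) + 1 = i ∧ Dotted D i' j

lemma RowLeft.single {n : ℕ} {D : Grid n} (h : IsCNAT D) {i : Fin n} (hr : RowLeft D i) :
    ∃ j i' : Fin n, IsLeaf D i j ∧ (i' : ℕ) + 1 = i ∧ Dotted D i' j ∧
      ∀ k, Dotted D i k → k = j := by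
  obtain ⟨j, i', hl, h1, h2⟩ := hr
  refine ⟨j, i', hl, h1, h2, fun k hk => ?_⟩
  rcases lt_trichotomy k j with c | c | c
  · exfalso
    have ha : HasDotAbove D i j := ⟨i', by simp only [Fin.lt_def]; omega, h2⟩
    have hb : HasDotLeft D i j := ⟨k, c, hk⟩
    rcases h.2.1 i j hl.1 (by omega) with hx | hx
    · exact hx.2 hb
    · exact hx.2 ha
  · exact c
  · exact absurd ⟨k, c, hk⟩ hl.2.2

/-- A leaf is either left (then its row is `RowLeft`) or right, not both. -/
lemma leaf_cases {n : ℕ} {D : Grid n} (h : IsCNAT D) (hs : Short' D) {i j : Fin n}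
    (hl : IsLeaf D i j) : RowLeft D i ↔ ¬ RowLeft (transp D) j := by
  constructor
  · intro h1 h2
    obtain ⟨j1, i1, hl1, h11, hd1, hu1⟩ := h1.single h
    obtain ⟨i2, j2, hl2, h22, hd2, hu2⟩ := h2.single (transp_cnat h)
    have := leaf_row_unique hl hl1
    subst this
    have := hu2 i1 hd1
    have := hu2 i hl.1
    subst this
    omega
  · intro hn
    rcases hs i j hl with ⟨i', a, b⟩ | ⟨j', a, b⟩
    · exact ⟨j, i', hl, a, b⟩
    · exact absurd ⟨i, j', transp_leaf.2 hl, a, b⟩ hn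

lemma rowLeft_pred {n : ℕ} {D : Grid n} (h : IsCNAT D)  {i : Fin n}
    (hl : RowLeft D i) : ∃ i' : Fin n, (i' : ℕ) + 1 = i ∧ ¬ RowLeft D i' := by
  obtain ⟨j, i', h1, h2, h3⟩ := hl
  refine ⟨i', h2, fun hc => ?_⟩
  obtain ⟨j1, i1, hl1, h11, hd1, hu1⟩ := hc.single h
  have := hu1 j h3
  subst this
  exact hl1.2.1 ⟨i, by simp only [Fin.lt_def]; omega, h1.1⟩

lemma card_le_aux {n : ℕ} {D : Grid n} (h : IsCNAT D) :
    Nat.card {i // RowLeft D i} ≤ Nat.card {i // ¬ RowLeft D i} := by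
  have hx := fun i : {i // RowLeft D i} => rowLeft_pred h i.2
  choose f hf1 hf2 using hx
  refine Nat.card_le_card_of_injective (fun i => (⟨f i, hf2 i⟩ : {i // ¬ RowLeft D i})) ?_
  intro a b hab
  have h1 : f a = f b := congrArg Subtype.val hab
  have := hf1 a
  have := hf1 b
  apply Subtype.ext; apply Fin.ext
  rw [h1] at *
  omega

lemma card_transp {n : ℕ} {D : Grid n} (h : IsCNAT D) (hs : Short' D) :
    Nat.card {i // ¬ RowLeft D i} ≤ Nat.card {j // RowLeft (transp D) j} := by
  choose f hf using exists_leaf_row h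
  refine Nat.card_le_card_of_injective
    (fun i => (⟨f i, by
      by_contra hc; exact i.2 ((leaf_cases h hs (hf i)).2 hc)⟩ : {j // RowLeft (transp D) j})) ?_
  intro a b hab
  have h1 : f a = f b := congrArg Subtype.val hab
  apply Subtype.ext
  have ha := hf a
  rw [h1] at ha
  exact leaf_col_unique ha (hf b)

lemma rowRight_succ {n : ℕ} {D : Grid n} (h : IsCNAT D) (hs : Short' D) {i : Fin n}
    (hl : ¬ RowLeft D i) : ∃ i' : Fin n, (i' : ℕ) = i + 1 ∧ RowLeft D i' := by
  have hx := fun i : {i // RowLeft D i} => rowLeft_pred h i.2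
  choose f hf1 hf2 using hx
  let F := (fun i => (⟨f i, hf2 i⟩ : {i // ¬ RowLeft D i}))
  have hinj : Function.Injective F := by
    intro a b hab
    have h1 : f a = f b := congrArg Subtype.val hab
    have := hf1 a
    have := hf1 b
    apply Subtype.ext; apply Fin.ext
    rw [h1] at *
    omega
  have e1 := card_le_aux h
  have e2 := card_transp h hs
  have e3 := card_le_aux (transp_cnat h)
  have e4 := card_transp (transp_cnat h) (transp_short hs)
  have e5 : transp (transp D) = D := rfl
  rw [e5] at e4
  have hb := (Nat.bijective_iff_injective_and_card F).2 ⟨hinj, by omega⟩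
  obtain ⟨a, ha⟩ := hb.2 ⟨i, hl⟩
  have h1 : f a = i := congrArg Subtype.val ha
  exact ⟨a, by rw [← hf1 a, h1], a.2⟩

lemma rowLeft_parity {n : ℕ} {D : Grid n} (h : IsCNAT D) (hs : Short' D) :
    ∀ (m : ℕ) (i : Fin n), (i : ℕ) = m → (RowLeft D i ↔ m % 2 = 1) := by
  intro m
  induction m with
  | zero =>
    intro i hi
    simp only [Nat.zero_mod, zero_ne_one, iff_false]
    intro hc
    obtain ⟨i', h1, -⟩ := rowLeft_pred h hc
    omega
  | succ m ih =>
    intro i hi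
    have hm : m < n := by omega
    have := ih ⟨m, hm⟩ rfl
    have key : RowLeft D i ↔ ¬ RowLeft D ⟨m, hm⟩ := by
      constructor
      · intro hc
        obtain ⟨i', h1, h2⟩ := rowLeft_pred h hc
        have : i' = ⟨m, hm⟩ := Fin.ext (by simp only; omega)
        rwa [← this]
      · intro hc
        obtain ⟨i', h1, h2⟩ := rowRight_succ h hs hc
        have : i' = i := Fin.ext (by simp only at h1; omega)
        rwa [← this]
    rw [key, this]
    omega

/-- Even index. -/
def ev {p : ℕ} (a : Fin p) : Fin (2 * p) := ⟨2 * a, by omega⟩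
/-- Odd index. -/
def od {p : ℕ} (a : Fin p) : Fin (2 * p) := ⟨2 * a + 1, by omega⟩
/-- Half of an index. -/
def hf {p : ℕ} (i : Fin (2 * p)) : Fin p := ⟨i / 2, by omega⟩

lemma ev_or_od {p : ℕ} (i : Fin (2 * p)) : (∃ a, i = ev a) ∨ (∃ a, i = od a) := by
  rcases Nat.mod_two_eq_zero_or_one i with c | c
  · exact Or.inl ⟨hf i, Fin.ext (by simp only [ev, hf]; omega)⟩
  · exact Or.inr ⟨hf i, Fin.ext (by simp only [od, hf]; omega)⟩

lemma exists_split {p : ℕ} {P : Fin (2 * p) → Prop} :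
    (∃ i, P i) ↔ (∃ a, P (ev a)) ∨ (∃ a, P (od a)) := by
  constructor
  · rintro ⟨i, hi⟩
    rcases ev_or_od i with ⟨a, rfl⟩ | ⟨a, rfl⟩
    · exact Or.inl ⟨a, hi⟩
    · exact Or.inr ⟨a, hi⟩
  · rintro (⟨a, ha⟩ | ⟨a, ha⟩)
    · exact ⟨_, ha⟩
    · exact ⟨_, ha⟩

lemma ev_lt_ev {p : ℕ} {a b : Fin p} : ev a < ev b ↔ a < b := by
  simp only [ev, Fin.lt_def]; omega
lemma od_lt_ev {p : ℕ} {a b : Fin p} : od a < ev b ↔ a < b := by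
  simp only [ev, od, Fin.lt_def]; omega
lemma ev_lt_od {p : ℕ} {a b : Fin p} : ev a < od b ↔ a ≤ b := by
  simp only [ev, od, Fin.lt_def, Fin.le_def]; omega
lemma od_lt_od {p : ℕ} {a b : Fin p} : od a < od b ↔ a < b := by
  simp only [od, Fin.lt_def]; omega

/-- Facts on odd rows of a CNAT with short leaves. -/
lemma odd_row {p : ℕ} {D : Grid (2 * p)} (h : IsCNAT D) (hs : Short' D) (a : Fin p) :
    ∃ b : Fin p, IsLeaf D (od a) (ev b) ∧ Dotted D (ev a) (ev b) ∧
      ∀ k, Dotted D (od a) k → k = ev b := by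
  have hr : RowLeft D (od a) := (rowLeft_parity h hs _ (od a) rfl).2 (by simp only [od]; omega)
  obtain ⟨j, i', h1, h2, h3, h4⟩ := hr.single h
  have hi : i' = ev a := Fin.ext (by simp only [od, ev] at *; omega)
  subst hi
  rcases ev_or_od j with ⟨b, rfl⟩ | ⟨b, rfl⟩
  · exact ⟨b, h1, h3, h4⟩
  · have hc : RowLeft (transp D) (od b) :=
      (rowLeft_parity (transp_cnat h) (transp_short hs) _ (od b) rfl).2 (by simp only [od]; omega)
    exact absurd hc ((leaf_cases h hs h1).1 hr)

lemma even_row {p : ℕ} {D : Grid (2 * p)} (h : IsCNAT D) (hs : Short' D) (a : Fin p) :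
    ∃ b : Fin p, IsLeaf D (ev a) (od b) ∧ Dotted D (ev a) (ev b) ∧
      ∀ k, Dotted D k (od b) → k = ev a := by
  have hr : ¬ RowLeft D (ev a) := fun hc => by
    have := (rowLeft_parity h hs _ (ev a) rfl).1 hc
    simp only [ev] at this; omega
  obtain ⟨j, hj⟩ := exists_leaf_row h (ev a)
  have hc : RowLeft (transp D) j := by
    by_contra hc
    exact hr ((leaf_cases h hs hj).2 hc)
  have hpar := (rowLeft_parity (transp_cnat h) (transp_short hs) _ j rfl).1 hc
  rcases ev_or_od j with ⟨b, rfl⟩ | ⟨b, rfl⟩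
  · simp only [ev] at hpar; omega
  · obtain ⟨a', h1, h2, h3⟩ := odd_row (transp_cnat h) (transp_short hs) b
    have : ev a = ev a' := h3 _ hj.1
    have h2' : Dotted D (ev a') (ev b) := h2
    rw [← this] at h2' h3
    exact ⟨b, hj, h2', h3⟩

lemma ev_inj {p : ℕ} {a b : Fin p} : ev a = ev b ↔ a = b := by
  simp only [ev, Fin.ext_iff]; omega
lemma od_inj {p : ℕ} {a b : Fin p} : od a = od b ↔ a = b := by
  simp only [od, Fin.ext_iff]; omega
lemma ev_ne_od {p : ℕ} {a b : Fin p} : ev a ≠ od b := by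
  simp only [ev, od, ne_eq, Fin.ext_iff]; omega

lemma id_of_le {p : ℕ} (f : Fin p → Fin p) (hi : Function.Injective f) (hle : ∀ a, a ≤ f a) :
    ∀ a, f a = a := by
  have hb := Finite.injective_iff_bijective.1 hi
  have hsum : ∑ a, (f a : ℕ) = ∑ a : Fin p, (a : ℕ) :=
    (Equiv.ofBijective f hb).sum_comp (fun a : Fin p => (a : ℕ))
  have := (Finset.sum_eq_sum_iff_of_le (s := Finset.univ)
    (f := fun a : Fin p => (a : ℕ)) (g := fun a => (f a : ℕ)) (fun a _ => hle a)).1 hsum.symm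
  intro a
  exact Fin.ext (this a (Finset.mem_univ a)).symm

/-- The structure of a CNAT of even size with short leaves. -/
lemma main_struct {p : ℕ} {D : Grid (2 * p)} (h : IsCNAT D) (hs : Short' D) :
    ∃ π : Fin p → Fin p, Function.Bijective π ∧
      (∀ a, IsLeaf D (ev a) (od (π a))) ∧ (∀ a, IsLeaf D (od a) (ev (π a))) ∧
      (∀ a, Dotted D (ev a) (ev (π a))) ∧
      (∀ a b, Dotted D (ev a) (od b) ↔ b = π a) ∧
      (∀ a b, Dotted D (od a) (ev b) ↔ b = π a) ∧
      (∀ a b, ¬ Dotted D (od a) (od b)) := by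
  choose π hπ1 hπ2 hπ3 using even_row h hs
  choose σ hσ1 hσ2 hσ3 using odd_row h hs
  choose τ hτ1 hτ2 hτ3 using even_row (transp_cnat h) (transp_short hs)
  have hπi : Function.Injective π := by
    intro a b hab
    have := hπ3 b (ev a) (by rw [← hab]; exact (hπ1 a).1)
    exact ev_inj.1 this
  have hτi : Function.Injective τ := by
    intro a b hab
    have := hτ3 b (ev a) (by rw [← hab]; exact (hτ1 a).1)
    exact ev_inj.1 this
  have hid := id_of_le (fun a => τ (π a)) (hτi.comp hπi) (by
    intro a
    by_contra hc
    have hc : τ (π a) < a := not_le.1 hc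
    exact (hτ1 (π a)).2.2 ⟨ev a, od_lt_ev.2 hc, hπ2 a⟩)
  have hσ : ∀ a, σ a = π a := by
    intro a
    have h1 := (hτ1 (π a)).1
    rw [hid a] at h1
    exact (ev_inj.1 (hσ3 a _ h1)).symm
  have hb := Finite.injective_iff_bijective.1 hπi
  simp only [hσ] at *
  refine ⟨π, hb, hπ1, hσ1, hπ2, ?_, ?_, ?_⟩
  · intro a b
    constructor
    · intro hd
      obtain ⟨a', rfl⟩ := hb.2 b
      rw [ev_inj.1 (hπ3 a' _ hd)]
    · rintro rfl; exact (hπ1 a).1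
  · intro a b
    constructor
    · intro hd
      exact ev_inj.1 (hσ3 a _ hd)
    · rintro rfl; exact (hσ1 a).1
  · intro a b hd
    exact ev_ne_od (hσ3 a _ hd).symm

/-- Restriction to even cells. -/
def restr {p : ℕ} (D : Grid (2 * p)) : Grid p := fun a b => D (ev a) (ev b)

lemma restr_leaf {p : ℕ} {D : Grid (2 * p)} {π : Fin p → Fin p} (hb : Function.Bijective π)
      (h1 : ∀ a, IsLeaf D (ev a) (od (π a))) (h2 : ∀ a, IsLeaf D (od a) (ev (π a)))
      (h3 : ∀ a, Dotted D (ev a) (ev (π a))) (a b : Fin p) (hd : Dotted (restr D) a b) :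
      (b = π a ∧ ¬ HasDotBelow (restr D) a b ∧ ¬ HasDotRight (restr D) a b) ∨
      (b ≠ π a ∧ HasDotBelow (restr D) a b ∧ HasDotRight (restr D) a b) := by
  by_cases hba : b = π a
  · left
    refine ⟨hba, ?_, ?_⟩
    · rintro ⟨a', h, h'⟩
      subst hba
      exact (h2 a).2.1 ⟨ev a', od_lt_ev.2 h, h'⟩
    · rintro ⟨b', h, h'⟩
      subst hba
      exact (h1 a).2.2 ⟨ev b', od_lt_ev.2 h, h'⟩
  · right
    refine ⟨hba, ?_, ?_⟩
    · obtain ⟨a', rfl⟩ := hb.2 b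
      refine ⟨a', ?_, h3 a'⟩
      by_contra hc
      rcases lt_or_eq_of_le (not_lt.1 hc) with hc | hc
      · exact (h2 a').2.1 ⟨ev a, od_lt_ev.2 hc, hd⟩
      · exact hba (by rw [hc])
    · refine ⟨π a, ?_, h3 a⟩
      by_contra hc
      rcases lt_or_eq_of_le (not_lt.1 hc) with hc | hc
      · exact (h1 a).2.2 ⟨ev b, od_lt_ev.2 hc, hd⟩
      · exact hba hc.symm

lemma restr_cnat {p : ℕ} {D : Grid (2 * p)} (h : IsCNAT D) (hs : Short' D) :
    IsCNAT (restr D) := by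
  obtain ⟨π, hb, h1, h2, h3, h4, h5, h6⟩ := main_struct h hs
  refine ⟨?_, ?_, fun a => ⟨π a, h3 a⟩, ?_, ?_⟩
  · intro i j hi hj
    exact h.1 _ _ (by simp only [ev]; omega) (by simp only [ev]; omega)
  · intro a b hd hne
    have hx := h.2.1 (ev a) (ev b) hd (by simp only [ev]; omega)
    have e1 : HasDotAbove D (ev a) (ev b) ↔ HasDotAbove (restr D) a b := by
      constructor
      · rintro ⟨i, hi, hi'⟩
        rcases ev_or_od i with ⟨c, rfl⟩ | ⟨c, rfl⟩
        · exact ⟨c, ev_lt_ev.1 hi, hi'⟩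
        · have := (h5 _ _).1 hi'
          subst this
          exact absurd ⟨_, hi, hd⟩ (h2 c).2.1
      · rintro ⟨c, hc, hc'⟩
        exact ⟨ev c, ev_lt_ev.2 hc, hc'⟩
    have e2 : HasDotLeft D (ev a) (ev b) ↔ HasDotLeft (restr D) a b := by
      constructor
      · rintro ⟨i, hi, hi'⟩
        rcases ev_or_od i with ⟨c, rfl⟩ | ⟨c, rfl⟩
        · exact ⟨c, ev_lt_ev.1 hi, hi'⟩
        · have := (h4 _ _).1 hi'
          subst this
          exact absurd ⟨_, hi, hd⟩ (h1 a).2.2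
      · rintro ⟨c, hc, hc'⟩
        exact ⟨ev c, ev_lt_ev.2 hc, hc'⟩
    rwa [e1, e2] at hx
  · intro b
    obtain ⟨a, rfl⟩ := hb.2 b
    exact ⟨a, h3 a⟩
  · intro a b hd
    rcases restr_leaf hb h1 h2 h3 a b hd with c | c
    · exact Or.inr c.2
    · exact Or.inl c.2

open Classical in
/-- Expansion of a CNAT: each leaf is replaced by a cherry. -/
noncomputable def expand {p : ℕ} (E : Grid p) : Grid (2 * p) := fun i j =>
  if (i : ℕ) % 2 = 0 ∧ (j : ℕ) % 2 = 0 then E (hf i) (hf j)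
  else if (i : ℕ) % 2 = 1 ∧ (j : ℕ) % 2 = 1 then false
  else decide (IsLeaf E (hf i) (hf j))

lemma hf_ev {p : ℕ} (a : Fin p) : hf (ev a) = a := by
  apply Fin.ext; simp only [hf, ev]; omega
lemma hf_od {p : ℕ} (a : Fin p) : hf (od a) = a := by
  apply Fin.ext; simp only [hf, od]; omega
lemma ev_mod {p : ℕ} (a : Fin p) : ((ev a : Fin (2 * p)) : ℕ) % 2 = 0 := by
  simp only [ev]; omega
lemma od_mod {p : ℕ} (a : Fin p) : ((od a : Fin (2 * p)) : ℕ) % 2 = 1 := by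
  simp only [od]; omega

lemma expand_ee {p : ℕ} {E : Grid p} {a b : Fin p} :
    Dotted (expand E) (ev a) (ev b) ↔ Dotted E a b := by
  simp [Dotted, expand, ev_mod, hf_ev]
lemma expand_eo {p : ℕ} {E : Grid p} {a b : Fin p} :
    Dotted (expand E) (ev a) (od b) ↔ IsLeaf E a b := by
  simp [Dotted, expand, ev_mod, od_mod, hf_ev, hf_od]
lemma expand_oe {p : ℕ} {E : Grid p} {a b : Fin p} :
    Dotted (expand E) (od a) (ev b) ↔ IsLeaf E a b := by
  simp [Dotted, expand, ev_mod, od_mod, hf_ev, hf_od]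
lemma expand_oo {p : ℕ} {E : Grid p} {a b : Fin p} :
    Dotted (expand E) (od a) (od b) ↔ False := by
  simp [Dotted, expand, od_mod]

lemma restr_expand {p : ℕ} (E : Grid p) : restr (expand E) = E := by
  funext a b
  simp [restr, expand, ev_mod, hf_ev]

lemma expand_restr {p : ℕ} {D : Grid (2 * p)} (h : IsCNAT D) (hs : Short' D) :
    expand (restr D) = D := by
  obtain ⟨π, hb, h1, h2, h3, h4, h5, h6⟩ := main_struct h hs
  have hl : ∀ a b, IsLeaf (restr D) a b ↔ b = π a := by
    intro a b
    constructor
    · intro hl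
      rcases restr_leaf hb h1 h2 h3 a b hl.1 with c | c
      · exact c.1
      · exact absurd c.2.1 hl.2.1
    · rintro rfl
      rcases restr_leaf hb h1 h2 h3 a _ (h3 a) with c | c
      · exact ⟨h3 a, c.2⟩
      · exact absurd rfl c.1
  funext i j
  rw [Bool.eq_iff_iff]
  change Dotted _ _ _ ↔ Dotted _ _ _
  rcases ev_or_od i with ⟨a, rfl⟩ | ⟨a, rfl⟩ <;> rcases ev_or_od j with ⟨b, rfl⟩ | ⟨b, rfl⟩
  · rw [expand_ee]; rfl
  · rw [expand_eo, hl, h4]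
  · rw [expand_oe, hl, h5]
  · rw [expand_oo]; simp [h6]

lemma expand_transp {p : ℕ} (E : Grid p) : transp (expand E) = expand (transp E) := by
  funext i j
  rw [Bool.eq_iff_iff]
  change Dotted (expand E) _ _ ↔ Dotted _ _ _
  rcases ev_or_od i with ⟨a, rfl⟩ | ⟨a, rfl⟩ <;> rcases ev_or_od j with ⟨b, rfl⟩ | ⟨b, rfl⟩
  · rw [expand_ee, expand_ee]; rfl
  · rw [expand_eo, expand_oe, transp_leaf]
  · rw [expand_oe, expand_eo, transp_leaf]
  · rw [expand_oo, expand_oo]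

lemma below_ee {p : ℕ} {E : Grid p} (h : IsCNAT E) {a b : Fin p} (hd : Dotted E a b) :
    HasDotBelow (expand E) (ev a) (ev b) := by
  rcases h.2.2.2.2 a b hd with ⟨⟨a', c, c'⟩, -⟩ | c
  · exact ⟨ev a', ev_lt_ev.2 c, expand_ee.2 c'⟩
  · exact ⟨od a, ev_lt_od.2 le_rfl, expand_oe.2 ⟨hd, c⟩⟩

lemma above_ee {p : ℕ} {E : Grid p} {a b : Fin p} (hd : Dotted E a b) :
    HasDotAbove (expand E) (ev a) (ev b) ↔ HasDotAbove E a b := by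
  constructor
  · rintro ⟨i, hi, hi'⟩
    rcases ev_or_od i with ⟨c, rfl⟩ | ⟨c, rfl⟩
    · exact ⟨c, ev_lt_ev.1 hi, expand_ee.1 hi'⟩
    · exact absurd ⟨a, od_lt_ev.1 hi, hd⟩ (expand_oe.1 hi').2.1
  · rintro ⟨c, hc, hcd⟩
    exact ⟨ev c, ev_lt_ev.2 hc, expand_ee.2 hcd⟩

/-- Odd rows of the expansion: facts on the left leaf. -/
lemma oe_facts {p : ℕ} {E : Grid p} {a b : Fin p} (hl : IsLeaf E a b) :
    HasDotAbove (expand E) (od a) (ev b) ∧ ¬ HasDotLeft (expand E) (od a) (ev b) ∧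
    ¬ HasDotBelow (expand E) (od a) (ev b) ∧ ¬ HasDotRight (expand E) (od a) (ev b) := by
  have hrow : ∀ k, Dotted (expand E) (od a) k → k = ev b := by
    intro k hk
    rcases ev_or_od k with ⟨c, rfl⟩ | ⟨c, rfl⟩
    · rw [leaf_row_unique (expand_oe.1 hk) hl]
    · exact (expand_oo.1 hk).elim
  refine ⟨⟨ev a, ev_lt_od.2 le_rfl, expand_ee.2 hl.1⟩, ?_, ?_, ?_⟩
  · rintro ⟨k, hk, hk'⟩
    exact absurd (hrow k hk') hk.ne
  · rintro ⟨k, hk, hk'⟩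
    rcases ev_or_od k with ⟨c, rfl⟩ | ⟨c, rfl⟩
    · exact hl.2.1 ⟨c, od_lt_ev.1 hk, expand_ee.1 hk'⟩
    · exact hl.2.1 ⟨c, od_lt_od.1 hk, (expand_oe.1 hk').1⟩
  · rintro ⟨k, hk, hk'⟩
    exact absurd (hrow k hk') hk.ne'

lemma eo_facts {p : ℕ} {E : Grid p} {a b : Fin p} (hl : IsLeaf E a b) :
    HasDotLeft (expand E) (ev a) (od b) ∧ ¬ HasDotAbove (expand E) (ev a) (od b) ∧
    ¬ HasDotRight (expand E) (ev a) (od b) ∧ ¬ HasDotBelow (expand E) (ev a) (od b) := by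
  have := oe_facts (transp_leaf.2 hl)
  rw [← expand_transp] at this
  exact this

lemma right_ee {p : ℕ} {E : Grid p} (h : IsCNAT E) {a b : Fin p} (hd : Dotted E a b) :
    HasDotRight (expand E) (ev a) (ev b) := by
  have := below_ee (transp_cnat h) (a := b) (b := a) hd
  rw [← expand_transp] at this
  exact this

lemma left_ee {p : ℕ} {E : Grid p} {a b : Fin p} (hd : Dotted E a b) :
    HasDotLeft (expand E) (ev a) (ev b) ↔ HasDotLeft E a b := by
  have := above_ee (E := transp E) (a := b) (b := a) hd
  rw [← expand_transp] at this
  exact this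

lemma expand_rows {p : ℕ} {E : Grid p} (h : IsCNAT E) (i : Fin (2 * p)) :
    ∃ j, Dotted (expand E) i j := by
  rcases ev_or_od i with ⟨a, rfl⟩ | ⟨a, rfl⟩ <;> obtain ⟨b, hb⟩ := exists_leaf_row h a
  · exact ⟨ev b, expand_ee.2 hb.1⟩
  · exact ⟨ev b, expand_oe.2 hb⟩

lemma expand_cnat {p : ℕ} {E : Grid p} (h : IsCNAT E) : IsCNAT (expand E) := by
  refine ⟨?_, ?_, expand_rows h, ?_, ?_⟩
  · intro i j hi hj
    have hp : 0 < p := by omega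
    have e1 : i = ev ⟨0, hp⟩ := Fin.ext (by simp only [ev]; omega)
    have e2 : j = ev ⟨0, hp⟩ := Fin.ext (by simp only [ev]; omega)
    rw [e1, e2]
    exact expand_ee.2 (h.1 _ _ rfl rfl)
  · intro i j hd hne
    rcases ev_or_od i with ⟨a, rfl⟩ | ⟨a, rfl⟩ <;> rcases ev_or_od j with ⟨b, rfl⟩ | ⟨b, rfl⟩
    · rw [expand_ee] at hd
      rw [above_ee hd, left_ee hd]
      exact h.2.1 a b hd (by simp only [ev] at hne; omega)
    · have := eo_facts (expand_eo.1 hd)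
      exact Or.inr ⟨this.1, this.2.1⟩
    · have := oe_facts (expand_oe.1 hd)
      exact Or.inl ⟨this.1, this.2.1⟩
    · exact (expand_oo.1 hd).elim
  · intro j
    have := expand_rows (transp_cnat h) j
    rw [← expand_transp] at this
    exact this
  · intro i j hd
    rcases ev_or_od i with ⟨a, rfl⟩ | ⟨a, rfl⟩ <;> rcases ev_or_od j with ⟨b, rfl⟩ | ⟨b, rfl⟩
    · rw [expand_ee] at hd
      exact Or.inl ⟨below_ee h hd, right_ee h hd⟩
    · have := eo_facts (expand_eo.1 hd)
      exact Or.inr ⟨this.2.2.2, this.2.2.1⟩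
    · have := oe_facts (expand_oe.1 hd)
      exact Or.inr this.2.2
    · exact (expand_oo.1 hd).elim

lemma expand_short {p : ℕ} {E : Grid p} (h : IsCNAT E) : Short' (expand E) := by
  intro i j hl
  rcases ev_or_od i with ⟨a, rfl⟩ | ⟨a, rfl⟩ <;> rcases ev_or_od j with ⟨b, rfl⟩ | ⟨b, rfl⟩
  · exact absurd (below_ee h (expand_ee.1 hl.1)) hl.2.1
  · exact Or.inr ⟨ev b, rfl, expand_ee.2 (expand_eo.1 hl.1).1⟩
  · exact Or.inl ⟨ev a, rfl, expand_ee.2 (expand_oe.1 hl.1).1⟩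
  · exact (expand_oo.1 hl.1).elim

/-- The bijection. -/
noncomputable def theEquiv (p : ℕ) : {D : Grid (2 * p) // IsCNAT D ∧ AllLeavesShort D}
        ≃ {D : Grid p // IsCNAT D} where
  toFun D := ⟨restr D.1, restr_cnat D.2.1 ((short_iff D.2.1).1 D.2.2)⟩
  invFun E := ⟨expand E.1, expand_cnat E.2,
    (short_iff (expand_cnat E.2)).2 (expand_short E.2)⟩
  left_inv D := Subtype.ext (expand_restr D.2.1 ((short_iff D.2.1).1 D.2.2))
  right_inv E := Subtype.ext (restr_expand E.1)

/-- For every `p ≥ 1`, the set `𝒜₂ₚ` of CNATs of size `2p`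
all of whose leaves are short is in bijection with the set of CNATs of size
`p`; in particular `|𝒜₂ₚ| = Tₚ`. -/
theorem cnat_all_short_even_bijection (p : ℕ) (hp : 1 ≤ p) :
    Nonempty ({D : Grid (2 * p) // IsCNAT D ∧ AllLeavesShort D}
        ≃ {D : Grid p // IsCNAT D}) ∧
    Nat.card {D : Grid (2 * p) // IsCNAT D ∧ AllLeavesShort D}
      = Nat.card {D : Grid p // IsCNAT D} := by
  exact ⟨⟨theEquiv p⟩, Nat.card_congr (theEquiv p)⟩

end CNATf
end

section
/- For every integer p ≥ 1 and every CNAT T of size 2p all of whose leaves are short, the sign of the associated permutation π(T) equals (−1)^p. -/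
/-!
Formalization of complete non-ambiguous trees (CNATs).

A CNAT of size `n` is modelled as a Boolean filling `D : Fin n → Fin n → Bool`
of the `n × n` grid (`D i j = true` meaning that cell in row `i`, column `j`
is dotted; rows are numbered from the top, columns from the left, `0`-based),
satisfying the root, non-ambiguity, minimality and completeness conditions.
-/

namespace CNATf

/-- A permutation of `Fin (2p)` sending the block `{2a, 2a+1}` to the block `{2c, 2c+1}`
in reversed order has sign `(-1)^p`. -/
theorem sign_of_block {p : ℕ} (π : Equiv.Perm (Fin (2 * p))) (σ : Equiv.Perm (Fin p))
    (h0 : ∀ (a : Fin p) (i : Fin (2 * p)), (i : ℕ) = 2 * a → (π i : ℕ) = 2 * σ a + 1)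
    (h1 : ∀ (a : Fin p) (i : Fin (2 * p)), (i : ℕ) = 2 * a + 1 → (π i : ℕ) = 2 * σ a) :
    Equiv.Perm.sign π = (-1) ^ p := by
  let e : Fin p × Fin 2 ≃ Fin (2 * p) := finProdFinEquiv.trans (finCongr (mul_comm p 2))
  have he : ∀ a b, (e (a, b) : ℕ) = b + 2 * a := by intro a b; simp [e]
  let q : Equiv.Perm (Fin p × Fin 2) :=
    (Equiv.prodCongrLeft (fun _ : Fin 2 => σ) : Equiv.Perm _) *
      (Equiv.prodCongrRight (fun _ : Fin p => Equiv.swap (0 : Fin 2) 1) : Equiv.Perm _)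
  have hq : π = e.permCongr q := by
    ext x
    obtain ⟨⟨a, b⟩, rfl⟩ := e.surjective x
    fin_cases b
    · rw [h0 a _ (by simp [he])]
      simp [q, he, Equiv.permCongr_apply]
      omega
    · rw [h1 a _ (by simp [he]; omega)]
      simp [q, he, Equiv.permCongr_apply]
  rw [hq, Equiv.Perm.sign_permCongr, Equiv.Perm.sign_mul, Equiv.Perm.sign_prodCongrLeft,
    Equiv.Perm.sign_prodCongrRight]
  simp

/-- Two permutations of `Fin p` which are pointwise comparable are equal. -/
theorem perm_eq_of_le {p : ℕ} (σ τ : Equiv.Perm (Fin p)) (h : ∀ a, (τ a : ℕ) ≤ σ a) :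
    τ = σ := by
  have hs : ∑ a, (τ a : ℕ) = ∑ a, (σ a : ℕ) := by
    rw [Equiv.sum_comp τ (fun a => (a : ℕ)), Equiv.sum_comp σ (fun a => (a : ℕ))]
  have := (Finset.sum_eq_sum_iff_of_le (fun a _ => h a)).1 hs
  ext a
  exact this a (Finset.mem_univ a)

/-- If predecessors of members of `A` exist and are outside `A`, and `2|A| ≥ n`,
then `A` consists of the odd numbers. -/
theorem odd_of_pred {n : ℕ} (A : Finset (Fin n))
    (hA : ∀ i ∈ A, ∃ k : Fin n, (k : ℕ) + 1 = i ∧ k ∉ A) (hc : Aᶜ.card ≤ A.card) :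
    (∀ i : Fin n, i ∈ A ↔ (i : ℕ) % 2 = 1) := by
  choose! f hf using hA
  have hmap : ∀ i ∈ A, f i ∈ Aᶜ := fun i hi => by simpa using (hf i hi).2
  have hinj : ∀ i ∈ A, ∀ j ∈ A, f i = f j → i = j := by
    intro i hi j hj hij
    have h1 := (hf i hi).1
    have h2 := (hf j hj).1
    rw [hij] at h1
    exact Fin.ext (by omega)
  have hsurj : ∀ k ∈ Aᶜ, ∃ i ∈ A, f i = k := by
    intro k hk
    obtain ⟨i, hi, h⟩ := Finset.surj_on_of_inj_on_of_card_le (fun a _ => f a) hmap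
      (fun a b ha hb h => hinj a ha b hb h) hc k hk
    exact ⟨i, hi, h.symm⟩
  have main : ∀ m : ℕ, ∀ i : Fin n, (i : ℕ) = m → (i ∈ A ↔ (i : ℕ) % 2 = 1) := by
    intro m
    induction m with
    | zero =>
      intro i hi
      constructor
      · intro h
        have := (hf i h).1
        omega
      · intro h; omega
    | succ m ih =>
      intro i hi
      have hm : m < n := by have := i.2; omega
      have h := ih ⟨m, hm⟩ rfl
      simp only at h
      constructor
      · intro hiA
        have h1 := (hf i hiA).1
        have h2 := (hf i hiA).2
        have : f i = ⟨m, hm⟩ := Fin.ext (by simp only; omega)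
        rw [this, h] at h2
        omega
      · intro hodd
        have h3 : (⟨m, hm⟩ : Fin n) ∈ Aᶜ := by
          rw [Finset.mem_compl, h]; omega
        obtain ⟨k, hk, hfk⟩ := hsurj _ h3
        have h1 := (hf k hk).1
        rw [hfk] at h1
        have : k = i := Fin.ext (by simp only at h1; omega)
        rwa [← this]
  exact fun i => main i i rfl

/-- For every `p ≥ 1` and every CNAT `T` of size `2p` all of
whose leaves are short, the sign of the associated permutation `π(T)` equals
`(-1)^p`. -/
theorem cnat_all_short_sign (p : ℕ) (hp : 1 ≤ p) (D : Grid (2 * p))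
    (hD : IsCNAT D) (hshort : AllLeavesShort D)
    (π : Equiv.Perm (Fin (2 * p))) (hπ : IsAssocPerm D π) :
    Equiv.Perm.sign π = (-1) ^ p := by
  classical
  obtain ⟨-, hamb, -, -, -⟩ := hD
  -- the leaf of row `i` is the last dot of its row and of its column
  have hrow : ∀ i j, Dotted D i j → j ≤ π i := by
    intro i j h
    by_contra hlt
    exact (hπ i).2.2 ⟨j, not_le.1 hlt, h⟩
  have hcol : ∀ i k, Dotted D k (π i) → k ≤ i := by
    intro i k h
    by_contra hlt
    exact (hπ i).2.1 ⟨k, not_le.1 hlt, h⟩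
  let L : Fin (2 * p) → Prop := fun i => HasDotAbove D i (π i)
  have hL : ∀ i, L i → ∃ k : Fin (2 * p), (k : ℕ) + 1 = i ∧ Dotted D k (π i) := by
    intro i hi
    obtain ⟨-, q, hq, hadj⟩ := hshort (i, π i) (hπ i)
    rcases hq with hq | hq
    · obtain ⟨h1, h2, h3, -⟩ := hq
      simp only at h1 h2 h3 hadj
      rcases hadj with hadj | hadj
      · exact ⟨q.1, hadj.1, h1 ▸ h3⟩
      · rw [hadj.2] at h2
        exact absurd h2 (lt_irrefl _)
    · exact absurd hi hq.2.2.2.2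
  have hR : ∀ i, ¬ L i → ∃ k : Fin (2 * p), (k : ℕ) + 1 = π i ∧ Dotted D i k := by
    intro i hi
    obtain ⟨-, q, hq, hadj⟩ := hshort (i, π i) (hπ i)
    rcases hq with hq | hq
    · obtain ⟨h1, h2, h3, -⟩ := hq
      simp only at h1 h2
      rw [h1] at h3
      exact absurd ⟨q.1, h2, h3⟩ hi
    · obtain ⟨h1, h2, h3, -, -⟩ := hq
      simp only at h1 h2 h3 hadj
      rcases hadj with hadj | hadj
      · rw [hadj.2] at h2
        exact absurd h2 (lt_irrefl _)
      · exact ⟨q.2, hadj.1, h1 ▸ h3⟩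
  -- rows of left leaves contain a single dot
  have hLs : ∀ i, L i → ∀ j, Dotted D i j → j = π i := by
    intro i hi j hj
    rcases (hrow i j hj).lt_or_eq with hlt | h
    · have hx := hamb i (π i) (hπ i).1 (by
        rintro ⟨-, h⟩
        have : (j : ℕ) < π i := hlt
        omega)
      rcases hx with hx | hx
      · exact absurd ⟨j, hlt, hj⟩ hx.2
      · exact absurd hi hx.2
    · exact h
  have hpredL : ∀ i, L i → ∃ k : Fin (2 * p), (k : ℕ) + 1 = i ∧ ¬ L k := by
    intro i hi
    obtain ⟨k, hk, hd⟩ := hL i hi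
    refine ⟨k, hk, fun hLk => ?_⟩
    have h := π.injective (hLs k hLk _ hd)
    rw [h] at hk
    omega
  have hpredR : ∀ i, ¬ L i → ∃ k : Fin (2 * p), (k : ℕ) + 1 = π i ∧ L (π.symm k) := by
    intro i hi
    obtain ⟨k, hk, hd⟩ := hR i hi
    refine ⟨k, hk, ?_⟩
    refine ⟨i, ?_, by simpa using hd⟩
    have hle := hcol (π.symm k) i (by simpa using hd)
    refine lt_of_le_of_ne hle ?_
    intro h
    rw [h, Equiv.apply_symm_apply] at hk
    omega
  let A : Finset (Fin (2 * p)) := Finset.univ.filter L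
  let B : Finset (Fin (2 * p)) := Finset.univ.filter (fun j => ¬ L (π.symm j))
  have hBA : B = Aᶜ.map π.toEmbedding := by
    ext j
    simp [A, B, Finset.mem_map_equiv]
  have hBc : Bᶜ.card = A.card := by
    have h1 := Finset.card_add_card_compl B
    have h2 := Finset.card_add_card_compl A
    have h3 : B.card = Aᶜ.card := by rw [hBA, Finset.card_map]
    omega
  have hBcard : B.card = Aᶜ.card := by rw [hBA, Finset.card_map]
  have hAp : ∀ i ∈ A, ∃ k : Fin (2 * p), (k : ℕ) + 1 = i ∧ k ∉ A := by
    intro i hi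
    simpa [A] using hpredL i (by simpa [A] using hi)
  have hBp : ∀ j ∈ B, ∃ k : Fin (2 * p), (k : ℕ) + 1 = j ∧ k ∉ B := by
    intro j hj
    have := hpredR (π.symm j) (by simpa [B] using hj)
    simpa [B] using this
  have hle : ∀ S : Finset (Fin (2 * p)),
      (∀ i ∈ S, ∃ k : Fin (2 * p), (k : ℕ) + 1 = i ∧ k ∉ S) → S.card ≤ Sᶜ.card := by
    intro S hS
    choose! f hf using hS
    refine Finset.card_le_card_of_injOn f (fun i hi => by simpa using (hf i hi).2) ?_
    intro i hi j hj hij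
    have h1 := (hf i hi).1
    have h2 := (hf j hj).1
    rw [hij] at h1
    exact Fin.ext (by omega)
  have hA1 := hle A hAp
  have hB1 := hle B hBp
  have hAodd := odd_of_pred A hAp (by omega)
  have hBodd := odd_of_pred B hBp (by omega)
  have hLodd : ∀ i, L i ↔ (i : ℕ) % 2 = 1 := fun i => by
    rw [← hAodd i]; simp [A]
  have hπodd : ∀ i, ¬ L i ↔ (π i : ℕ) % 2 = 1 := fun i => by
    rw [← hBodd (π i)]; simp [B]
  -- the two induced maps on blocks
  let r0 : Fin p → Fin (2 * p) := fun a => ⟨2 * a, by omega⟩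
  let r1 : Fin p → Fin (2 * p) := fun a => ⟨2 * a + 1, by omega⟩
  have hr0 : ∀ a, (π (r0 a) : ℕ) % 2 = 1 := fun a => by
    rw [← hπodd, hLodd]; simp [r0]
  have hr1 : ∀ a, (π (r1 a) : ℕ) % 2 = 0 := fun a => by
    have h1 : L (r1 a) := by rw [hLodd]; simp [r1]
    have h2 := hπodd (r1 a)
    have h3 : ¬ ((π (r1 a) : ℕ) % 2 = 1) := fun h => h2.2 h h1
    omega
  let σ0 : Fin p → Fin p := fun a => ⟨(π (r0 a) : ℕ) / 2, by omega⟩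
  let τ0 : Fin p → Fin p := fun a => ⟨(π (r1 a) : ℕ) / 2, by omega⟩
  have hσi : Function.Injective σ0 := by
    intro a b h
    have h1 : (π (r0 a) : ℕ) / 2 = (π (r0 b) : ℕ) / 2 := congrArg Fin.val h
    have h2 : π (r0 a) = π (r0 b) := Fin.ext (by have := hr0 a; have := hr0 b; omega)
    have h3 := congrArg Fin.val (π.injective h2)
    simp only [r0] at h3
    exact Fin.ext (by omega)
  have hτi : Function.Injective τ0 := by
    intro a b h
    have h1 : (π (r1 a) : ℕ) / 2 = (π (r1 b) : ℕ) / 2 := congrArg Fin.val h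
    have h2 : π (r1 a) = π (r1 b) := Fin.ext (by have := hr1 a; have := hr1 b; omega)
    have h3 := congrArg Fin.val (π.injective h2)
    simp only [r1] at h3
    exact Fin.ext (by omega)
  let σ : Equiv.Perm (Fin p) := Equiv.ofBijective σ0 (Finite.injective_iff_bijective.1 hσi)
  let τ : Equiv.Perm (Fin p) := Equiv.ofBijective τ0 (Finite.injective_iff_bijective.1 hτi)
  have hστ : τ = σ := by
    apply perm_eq_of_le
    intro a
    change (π (r1 a) : ℕ) / 2 ≤ (π (r0 a) : ℕ) / 2
    obtain ⟨k, hk, hd⟩ := hL (r1 a) (by rw [hLodd]; simp [r1])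
    have hk0 : k = r0 a := Fin.ext (by simp only [r1] at hk; simp only [r0]; omega)
    have h1 : (π (r1 a) : ℕ) ≤ π (r0 a) := hrow _ _ (hk0 ▸ hd)
    omega
  apply sign_of_block π σ
  · intro a i hi
    have h : i = r0 a := Fin.ext hi
    have h2 := hr0 a
    change _ = 2 * ((π (r0 a) : ℕ) / 2) + 1
    rw [h]; omega
  · intro a i hi
    have h : i = r1 a := Fin.ext hi
    have h2 := hr1 a
    rw [← hστ]
    change _ = 2 * ((π (r1 a) : ℕ) / 2)
    rw [h]; omega

end CNATf
end
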